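/- arXiv:2111.14477 — 7 statements merged into one kernel-verified Lean document; each statement's English description precedes it below -/
import Mathlib

section
/- Let n ≥ 3 be odd and let p be a prime divisor of n. If p is the unique prime divisor of n whose exponent v_p(n) in n is odd, then L(n;p) = U(n); otherwise L(n;p) is a subgroup of index 2 in U(n). -/
lemma jacobi_val_mul {n : ℕ} (m : ℕ) (hm : m ∣ n) (a b : ZMod n) :
    jacobiSym (((a * b).val : ℕ) : ℤ) m
      = jacobiSym ((a.val : ℕ) : ℤ) m * jacobiSym ((b.val : ℕ) : ℤ) m := by
  rw [ZMod.val_mul, ← jacobiSym.mul_left]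
  apply jacobiSym.mod_left'
  push_cast
  rw [Int.emod_emod_of_dvd _ (Int.natCast_dvd_natCast.mpr hm)]

lemma jacobi_val_one {n : ℕ} (m : ℕ) (hm : m ∣ n) :
    jacobiSym (((1 : ZMod n).val : ℕ) : ℤ) m = 1 := by
  rw [ZMod.val_one_eq_one_mod]
  have : jacobiSym (((1 % n : ℕ) : ℤ)) m = jacobiSym 1 m := by
    apply jacobiSym.mod_left'
    push_cast
    rw [Int.emod_emod_of_dvd _ (Int.natCast_dvd_natCast.mpr hm)]
  rw [this, jacobiSym.one_left]

/-- `S(n)` as a subgroup of `U(n)`: the kernel of `a ↦ (a/n)` (Jacobi symbol). -/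
def SGroup (n : ℕ) : Subgroup (ZMod n)ˣ where
  carrier := {a | jacobiSym (((a : ZMod n).val : ℕ) : ℤ) n = 1}
  one_mem' := jacobi_val_one n dvd_rfl
  mul_mem' := by
    intro a b ha hb
    simp only [Set.mem_setOf_eq, Units.val_mul] at *
    rw [jacobi_val_mul n dvd_rfl, ha, hb, mul_one]
  inv_mem' := by
    intro a ha
    simp only [Set.mem_setOf_eq] at *
    have h1 : jacobiSym ((((a : ZMod n) * ((a⁻¹ : (ZMod n)ˣ) : ZMod n)).val : ℕ) : ℤ) n = 1 := by
      rw [Units.mul_inv]; exact jacobi_val_one n dvd_rfl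
    rw [jacobi_val_mul n dvd_rfl, ha, one_mul] at h1
    exact h1

/-- `L(n;p)` as a subgroup of `U(n)`: the units `a` with `(a/n) = (a/p)`. -/
def LGroup (n p : ℕ) (hp : p ∣ n) : Subgroup (ZMod n)ˣ where
  carrier := {a | jacobiSym (((a : ZMod n).val : ℕ) : ℤ) n
                = jacobiSym (((a : ZMod n).val : ℕ) : ℤ) p}
  one_mem' := by
    simp only [Set.mem_setOf_eq, Units.val_one]
    rw [jacobi_val_one n dvd_rfl, jacobi_val_one p hp]
  mul_mem' := by
    intro a b ha hb
    simp only [Set.mem_setOf_eq, Units.val_mul] at *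
    rw [jacobi_val_mul n dvd_rfl, jacobi_val_mul p hp, ha, hb]
  inv_mem' := by
    intro a ha
    simp only [Set.mem_setOf_eq] at *
    have h1 : jacobiSym ((((a : ZMod n) * ((a⁻¹ : (ZMod n)ˣ) : ZMod n)).val : ℕ) : ℤ) n = 1 := by
      rw [Units.mul_inv]; exact jacobi_val_one n dvd_rfl
    have h2 : jacobiSym ((((a : ZMod n) * ((a⁻¹ : (ZMod n)ˣ) : ZMod n)).val : ℕ) : ℤ) p = 1 := by
      rw [Units.mul_inv]; exact jacobi_val_one p hp
    rw [jacobi_val_mul n dvd_rfl] at h1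
    rw [jacobi_val_mul p hp] at h2
    rcases Int.eq_one_or_neg_one_of_mul_eq_one' h1 with ⟨hx, hy⟩ | ⟨hx, hy⟩ <;>
      rcases Int.eq_one_or_neg_one_of_mul_eq_one' h2 with ⟨hx2, hy2⟩ | ⟨hx2, hy2⟩ <;>
        simp_all

/-! For `d ∣ n` and a unit `a` modulo `n` both `(a/n)` and `(a/d)` are `±1`, so they agree exactly
when their product `(a/nd)` is `1`. Hence `L(n;d)` is the kernel of the character `a ↦ (a/nd)` with
values in `{±1}`: it is `U(n)` if this character is trivial and has index `2` otherwise. The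
character is trivial exactly when `nd` is a square, since if some `v_q(nd)` is odd, the Chinese
remainder theorem provides an `a` which is a nonresidue modulo `q` and is `1` modulo the other
prime powers in `nd`. Finally `np` is a square exactly when `p` is the only prime at which `n` has
odd exponent. -/

theorem isSquare_iff_forall_prime_even_factorization {n : ℕ} :
    IsSquare n ↔ ∀ q : ℕ, q.Prime → Even (n.factorization q) := by
  constructor
  · rintro ⟨b, rfl⟩ q -
    rw [← sq, Nat.factorization_pow]
    exact even_two_mul _
  · intro h
    obtain rfl | hn := eq_or_ne n 0
    · exact IsSquare.zero
    refine (isSquare_iff_exists_sq n).mpr ⟨Nat.floorRoot 2 n, ?_⟩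
    have hroot : Nat.floorRoot 2 n ≠ 0 := Nat.floorRoot_ne_zero.mpr ⟨two_ne_zero, hn⟩
    refine Nat.eq_of_factorization_eq hn (pow_ne_zero 2 hroot) fun q ↦ ?_
    rw [Nat.factorization_pow, Nat.factorization_floorRoot, Finsupp.smul_apply,
      Finsupp.floorDiv_apply, Nat.floorDiv_eq_div, smul_eq_mul]
    by_cases hq : q.Prime
    · exact (Nat.two_mul_div_two_of_even (h q hq)).symm
    · simp only [Nat.factorization_eq_zero_of_not_prime n hq, Nat.zero_div, mul_zero]

theorem isSquare_mul_prime_iff {n p : ℕ} (hn : n ≠ 0) (hp : p.Prime) :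
    IsSquare (n * p) ↔ Odd (n.factorization p) ∧
      ∀ q : ℕ, q.Prime → q ∣ n → Odd (n.factorization q) → q = p := by
  have even_at_self : Even ((n * p).factorization p) ↔ Odd (n.factorization p) := by
    rw [Nat.factorization_mul hn hp.ne_zero, Finsupp.add_apply, hp.factorization_self,
      Nat.even_add_one, Nat.not_even_iff_odd]
  have even_at_ne {q : ℕ} (hqp : q ≠ p) :
      Even ((n * p).factorization q) ↔ Even (n.factorization q) := by
    rw [Nat.factorization_mul hn hp.ne_zero, Finsupp.add_apply, hp.factorization,
      Finsupp.single_eq_of_ne hqp, add_zero]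
  rw [isSquare_iff_forall_prime_even_factorization]
  constructor
  · refine fun h ↦ ⟨even_at_self.mp (h p hp), fun q hq _ hodd ↦ ?_⟩
    by_contra hqp
    exact Nat.not_even_iff_odd.mpr hodd ((even_at_ne hqp).mp (h q hq))
  · rintro ⟨hpodd, honly⟩ q hq
    obtain rfl | hqp := eq_or_ne q p
    · exact even_at_self.mpr hpodd
    rw [even_at_ne hqp, ← Nat.not_odd_iff_even]
    exact fun hodd ↦ hqp (honly q hq (Nat.dvd_of_factorization_pos hodd.pos.ne') hodd)

theorem jacobiSym_eq_one_of_isSquare {a : ℤ} {m : ℕ} (ham : a.gcd m = 1) (hm : IsSquare m) :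
    jacobiSym a m = 1 := by
  obtain ⟨b, rfl⟩ := hm.exists_sq
  have hab : a.gcd b = 1 := Nat.Coprime.coprime_dvd_right (dvd_pow_self b two_ne_zero) ham
  rw [jacobiSym.pow_right, jacobiSym.sq_one hab]

theorem exists_jacobiSym_prime_eq_neg_one {q : ℕ} (hq : q.Prime) (hq2 : q ≠ 2) :
    ∃ a : ℕ, jacobiSym a q = -1 := by
  have : Fact q.Prime := ⟨hq⟩
  obtain ⟨x, hx⟩ := FiniteField.exists_nonsquare (F := ZMod q) (by rwa [ZMod.ringChar_zmod_n])
  refine ⟨x.val, ZMod.nonsquare_iff_jacobiSym_eq_neg_one.mpr ?_⟩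
  rwa [Int.cast_natCast, ZMod.natCast_zmod_val]

theorem exists_jacobiSym_eq_neg_one {m : ℕ} (hodd : Odd m) (hm : ¬ IsSquare m) :
    ∃ a : ℕ, jacobiSym a m = -1 := by
  obtain ⟨q, hq, hqm⟩ : ∃ q : ℕ, q.Prime ∧ Odd (m.factorization q) := by
    simpa only [isSquare_iff_forall_prime_even_factorization, not_forall, exists_prop,
      Nat.not_even_iff_odd] using hm
  have hm0 : m ≠ 0 := hodd.pos.ne'
  have hq2 : q ≠ 2 :=
    (hodd.of_dvd_nat (Nat.dvd_of_factorization_pos hqm.pos.ne')).ne_two_of_dvd_nat dvd_rfl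
  obtain ⟨c, hc⟩ := exists_jacobiSym_prime_eq_neg_one hq hq2
  obtain ⟨a, hac, ha1⟩ := Nat.chineseRemainder (Nat.coprime_ordCompl hq hm0) c 1
  have haq : jacobiSym a q = -1 := hc ▸ jacobiSym.mod_left' (by exact_mod_cast hac)
  have har : jacobiSym a (ordCompl[q] m) = 1 :=
    (jacobiSym.mod_left' (by exact_mod_cast ha1)).trans (jacobiSym.one_left _)
  refine ⟨a, ?_⟩
  rw [← Nat.ordProj_mul_ordCompl_eq_self m q,
    jacobiSym.mul_right' _ (pow_ne_zero _ hq.ne_zero) (Nat.ordCompl_pos q hm0).ne',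
    jacobiSym.pow_right, haq, har, hqm.neg_one_pow, mul_one]

theorem index_ker_eq_two_of_ne_one {G : Type*} [Group G] {f : G →* ℤˣ} (hf : f ≠ 1) :
    f.ker.index = 2 := by
  obtain ⟨g, hg⟩ := DFunLike.ne_iff.mp hf
  have hg' : f g = -1 := (Int.units_eq_one_or (f g)).resolve_left hg
  refine Subgroup.index_eq_two_iff.mpr ⟨g, fun x ↦ ?_⟩
  rw [MonoidHom.mem_ker, MonoidHom.mem_ker, map_mul, hg']
  obtain hx | hx := Int.units_eq_one_or (f x) <;> rw [hx] <;> decide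

/-- The character `a ↦ (a/m)` of `U(n)`, for `m` a divisor of `n`. It takes values in `ℤˣ` rather
than `ℤ` so that two such characters agree at `a` exactly when their product is `1` there. -/
def jacobiUnitsHom {n m : ℕ} (hmn : m ∣ n) : (ZMod n)ˣ →* ℤˣ :=
  MonoidHom.toHomUnits
    { toFun := fun a ↦ jacobiSym ((a : ZMod n).val : ℤ) m
      map_one' := jacobi_val_one m hmn
      map_mul' := fun a b ↦ jacobi_val_mul m hmn a b }

section JacobiUnitsHom

variable {n d : ℕ}

theorem coe_jacobiUnitsHom (hdn : d ∣ n) (a : (ZMod n)ˣ) :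
    (jacobiUnitsHom hdn a : ℤ) = jacobiSym ((a : ZMod n).val : ℤ) d :=
  rfl

theorem coe_jacobiUnitsHom_unitOfCoprime (hdn : d ∣ n) {a : ℕ} (ha : a.Coprime n) :
    (jacobiUnitsHom hdn (ZMod.unitOfCoprime a ha) : ℤ) = jacobiSym a d := by
  rw [coe_jacobiUnitsHom, ZMod.coe_unitOfCoprime, ZMod.val_natCast]
  refine jacobiSym.mod_left' ?_
  rw [Int.natCast_mod, Int.emod_emod_of_dvd _ (Int.natCast_dvd_natCast.mpr hdn)]

theorem lGroup_eq_ker (hdn : d ∣ n) :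
    LGroup n d hdn = (jacobiUnitsHom dvd_rfl * jacobiUnitsHom hdn).ker := by
  ext a
  rw [MonoidHom.mem_ker, MonoidHom.mul_apply, mul_eq_one_iff_eq_inv, Int.units_inv_eq_self,
    Units.ext_iff]
  rfl

theorem jacobiUnitsHom_mul_eq_one_iff (hodd : Odd n) (hdn : d ∣ n) :
    jacobiUnitsHom dvd_rfl * jacobiUnitsHom hdn = 1 ↔ IsSquare (n * d) := by
  have hn0 : n ≠ 0 := hodd.pos.ne'
  have hd0 : d ≠ 0 := ne_zero_of_dvd_ne_zero hn0 hdn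
  constructor
  · intro htriv
    by_contra hsq
    obtain ⟨a, ha⟩ := exists_jacobiSym_eq_neg_one (hodd.mul (hodd.of_dvd_nat hdn)) hsq
    have hand : (a : ℤ).gcd (n * d : ℕ) = 1 := by
      by_contra hgcd
      have hzero := jacobiSym.eq_zero_iff.mpr ⟨mul_ne_zero hn0 hd0, hgcd⟩
      exact absurd (ha.symm.trans hzero) (by decide)
    have han : a.Coprime n := Nat.Coprime.coprime_mul_right_right hand
    have hval := congrArg Units.val (DFunLike.congr_fun htriv (ZMod.unitOfCoprime a han))
    rw [MonoidHom.mul_apply, Units.val_mul, coe_jacobiUnitsHom_unitOfCoprime,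
      coe_jacobiUnitsHom_unitOfCoprime, ← jacobiSym.mul_right' _ hn0 hd0, ha,
      MonoidHom.one_apply, Units.val_one] at hval
    exact absurd hval (by decide)
  · intro hsq
    ext a
    have han : (a : ZMod n).val.Coprime n := ZMod.val_coe_unit_coprime a
    have hand : (a : ZMod n).val.Coprime (n * d) := han.mul_right (han.coprime_dvd_right hdn)
    rw [MonoidHom.mul_apply, Units.val_mul, coe_jacobiUnitsHom, coe_jacobiUnitsHom,
      ← jacobiSym.mul_right' _ hn0 hd0]
    exact jacobiSym_eq_one_of_isSquare hand hsq

end JacobiUnitsHom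

theorem lgroup_top_or_index_two_general (n d : ℕ) (hodd : Odd n) (hdn : d ∣ n) :
    (IsSquare (n * d) → LGroup n d hdn = ⊤) ∧
    (¬ IsSquare (n * d) → (LGroup n d hdn).index = 2) := by
  rw [← jacobiUnitsHom_mul_eq_one_iff hodd hdn, lGroup_eq_ker]
  exact ⟨MonoidHom.ker_eq_top_iff.mpr, index_ker_eq_two_of_ne_one⟩

theorem lgroup_top_or_index_two (n p : ℕ) (hn : 3 ≤ n) (hodd : Odd n)
    (hp : p.Prime) (hpn : p ∣ n) :
    ((Odd (n.factorization p) ∧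
        ∀ q : ℕ, q.Prime → q ∣ n → Odd (n.factorization q) → q = p) →
      LGroup n p hpn = ⊤) ∧
    (¬ (Odd (n.factorization p) ∧
        ∀ q : ℕ, q.Prime → q ∣ n → Odd (n.factorization q) → q = p) →
      (LGroup n p hpn).index = 2) := by
  rw [← isSquare_mul_prime_iff hodd.pos.ne' hp]
  exact lgroup_top_or_index_two_general n p hodd hpn
end

section
/- Let n be odd, let p' be a prime divisor of n, and let A = L(n;p'). Let p be a prime divisor of n such that p is coprime with n' = n/p. Then S(n') ⊆ f(A), where f : Z_n → Z_{n'} is the natural map. -/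
open scoped BigOperators

/-- `S` is an `A`-weighted zero-sum sequence in `ZMod n`. -/
def IsWZS {n : ℕ} (A : Set (ZMod n)) {l : ℕ} (S : Fin l → ZMod n) : Prop :=
  ∃ a : Fin l → ZMod n, (∀ i, a i ∈ A) ∧ ∑ i, a i * S i = 0

/-- `S` has a nonempty subsequence which is an `A`-weighted zero-sum sequence. -/
def HasWZSSub {n : ℕ} (A : Set (ZMod n)) {l : ℕ} (S : Fin l → ZMod n) : Prop :=
  ∃ I : Finset (Fin l), I.Nonempty ∧ ∃ a : Fin l → ZMod n,
    (∀ i ∈ I, a i ∈ A) ∧ ∑ i ∈ I, a i * S i = 0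

/-- The `A`-weighted Davenport constant of `ZMod n`: the least positive integer `k`
such that every sequence of `k` elements of `ZMod n` has a nonempty subsequence
which is an `A`-weighted zero-sum sequence. -/
noncomputable def DavW (n : ℕ) (A : Set (ZMod n)) : ℕ :=
  sInf {k | 0 < k ∧ ∀ S : Fin k → ZMod n, HasWZSSub A S}

/-- An `A`-extremal sequence for the Davenport constant: a sequence of length
`D_A(n) - 1` with no nonempty `A`-weighted zero-sum subsequence. -/
def IsExtremal (n : ℕ) (A : Set (ZMod n)) {l : ℕ} (S : Fin l → ZMod n) : Prop :=
  l = DavW n A - 1 ∧ ¬ HasWZSSub A S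

/-- The set of units of `ZMod n`, as a weight set. -/
def USet (n : ℕ) : Set (ZMod n) := {a | IsUnit a}

/-- `S(n)`: the units `a` of `ZMod n` with Jacobi symbol `(a/n) = 1`. -/
def JSet (n : ℕ) : Set (ZMod n) := {a | IsUnit a ∧ jacobiSym (a.val : ℤ) n = 1}

/-- `L(n;p)`: the units `a` of `ZMod n` with `(a/n) = (a/p)`. -/
def LSet (n p : ℕ) : Set (ZMod n) :=
  {a | IsUnit a ∧ jacobiSym (a.val : ℤ) n = jacobiSym (a.val : ℤ) p}

/-- Two sequences are equivalent with respect to the weight set `A`. -/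
def EquivWrt {n : ℕ} (A : Set (ZMod n)) {k : ℕ} (x y : Fin k → ZMod n) : Prop :=
  ∃ (a : Fin k → ZMod n) (c : (ZMod n)ˣ) (σ : Equiv.Perm (Fin k)),
    (∀ i, a i ∈ A) ∧ ∀ i, y (σ i) = (c : ZMod n) * (a i * x i)

/- By the Chinese remainder theorem, a unit `v` of `ZMod m` lifts to a unit `k` of `ZMod (d * m)`
with any prescribed unit residue `c` modulo `d`, and `(k/dm) = (c/d) (v/m)`. If `q ∣ m`, then
`(k/q) = (v/q)` is already fixed, so `k` lies in `L(dm;q)` as soon as `(c/d) = (v/m) (v/q)`; such a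
`c` exists because the Jacobi symbol modulo an odd nonsquare takes the value `-1`. If `q ∣ d`, then
`c = 1` gives `(k/q) = 1`, and `(k/dm) = 1` when `v` is in `S(m)`. -/

open scoped NumberTheorySymbols

theorem jacobiSym_congr {a b m : ℕ} (h : a ≡ b [MOD m]) : J(a | m) = J(b | m) :=
  jacobiSym.mod_left' (by exact_mod_cast h)

theorem exists_modEq_modEq_jacobiSym_eq_mul {d m c v : ℕ} (hd : d ≠ 0) (hm : m ≠ 0)
    (hdm : d.Coprime m) (hc : c.Coprime d) (hv : v.Coprime m) :
    ∃ k : ℕ, k ≡ c [MOD d] ∧ k ≡ v [MOD m] ∧ k.Coprime (d * m) ∧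
      J(k | d * m) = J(c | d) * J(v | m) := by
  obtain ⟨k, hkc, hkv⟩ := Nat.chineseRemainder hdm c v
  refine ⟨k, hkc, hkv, ?_, ?_⟩
  · exact Nat.Coprime.mul_right (hkc.gcd_eq.trans hc) (hkv.gcd_eq.trans hv)
  · rw [jacobiSym.mul_right' _ hd hm, jacobiSym_congr hkc, jacobiSym_congr hkv]

theorem exists_coprime_jacobiSym_prime_eq_neg_one {p : ℕ} (hp : p.Prime) (hp2 : p ≠ 2) :
    ∃ c : ℕ, c.Coprime p ∧ J(c | p) = -1 := by
  have : Fact p.Prime := ⟨hp⟩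
  obtain ⟨x, hx⟩ := FiniteField.exists_nonsquare (F := ZMod p) (by rwa [ZMod.ringChar_zmod_n])
  have hx0 : x ≠ 0 := by
    rintro rfl
    exact hx IsSquare.zero
  refine ⟨x.val, ZMod.val_coe_unit_coprime (Units.mk0 x hx0), ?_⟩
  rw [ZMod.nonsquare_iff_jacobiSym_eq_neg_one, Int.cast_natCast, ZMod.natCast_zmod_val]
  exact hx

theorem exists_prime_odd_factorization_of_not_isSquare {d : ℕ} (hd0 : d ≠ 0)
    (hd : ¬IsSquare d) : ∃ p, p.Prime ∧ Odd (d.factorization p) := by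
  contrapose! hd
  rw [← Nat.prod_factorization_pow_eq_self hd0]
  exact Finset.isSquare_prod _ fun p hp ↦
    (Nat.not_odd_iff_even.1 (hd p (Nat.prime_of_mem_primeFactors hp))).isSquare_pow p

theorem exists_coprime_jacobiSym_eq_neg_one {d : ℕ} (hodd : Odd d) (hd : ¬IsSquare d) :
    ∃ c : ℕ, c.Coprime d ∧ J(c | d) = -1 := by
  have hd0 : d ≠ 0 := hodd.pos.ne'
  obtain ⟨p, hp, he⟩ := exists_prime_odd_factorization_of_not_isSquare hd0 hd
  have hp2 : p ≠ 2 := by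
    rintro rfl
    have h2 : 2 ∣ d := Nat.dvd_of_factorization_pos he.pos.ne'
    exact hodd.not_two_dvd_nat h2
  obtain ⟨c, hcp, hc⟩ := exists_coprime_jacobiSym_prime_eq_neg_one hp hp2
  obtain ⟨k, -, -, hkd, hk⟩ := exists_modEq_modEq_jacobiSym_eq_mul
    (pow_ne_zero (d.factorization p) hp.ne_zero) (Nat.ordCompl_pos p hd0).ne'
    ((Nat.coprime_ordCompl hp hd0).pow_left _) (hcp.pow_right _) (Nat.coprime_one_left _)
  rw [Nat.ordProj_mul_ordCompl_eq_self] at hkd hk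
  refine ⟨k, hkd, ?_⟩
  rw [hk, jacobiSym.pow_right, hc, he.neg_one_pow, Nat.cast_one, jacobiSym.one_left, mul_one]

theorem exists_coprime_jacobiSym_eq {d m v : ℕ} (hodd : Odd d) (hd : ¬IsSquare d)
    (hv : v.Coprime m) : ∃ c : ℕ, c.Coprime d ∧ J(c | d) = J(v | m) := by
  rcases jacobiSym.eq_one_or_neg_one (a := v) (b := m) hv with h | h
  · exact ⟨1, Nat.coprime_one_left d, by rw [h, Nat.cast_one, jacobiSym.one_left]⟩
  · rw [h]
    exact exists_coprime_jacobiSym_eq_neg_one hodd hd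

theorem jacobiSym_val_natCast {n m : ℕ} (h : m ∣ n) (k : ℕ) :
    J((k : ZMod n).val | m) = J(k | m) := by
  rw [ZMod.val_natCast]
  exact jacobiSym_congr ((Nat.mod_modEq k n).of_dvd h)

theorem natCast_mem_USet_iff {n k : ℕ} : (k : ZMod n) ∈ USet n ↔ k.Coprime n :=
  ZMod.isUnit_iff_coprime k n

theorem natCast_mem_JSet_iff {n k : ℕ} : (k : ZMod n) ∈ JSet n ↔ k.Coprime n ∧ J(k | n) = 1 :=
  (ZMod.isUnit_iff_coprime k n).and (by rw [jacobiSym_val_natCast dvd_rfl])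

theorem natCast_mem_LSet_iff {n q k : ℕ} (hq : q ∣ n) :
    (k : ZMod n) ∈ LSet n q ↔ k.Coprime n ∧ J(k | n) = J(k | q) :=
  (ZMod.isUnit_iff_coprime k n).and
    (by rw [jacobiSym_val_natCast dvd_rfl, jacobiSym_val_natCast hq])

section Image

variable {n d m q : ℕ} [NeZero n]

theorem natCast_mem_image_LSet (hn : d * m = n) (hdm : d.Coprime m) (hq : q ∣ n) {c v : ℕ}
    (hc : c.Coprime d) (hv : v.Coprime m)
    (hL : ∀ k : ℕ, k ≡ c [MOD d] → k ≡ v [MOD m] → J(c | d) * J(v | m) = J(k | q)) :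
    (v : ZMod m) ∈ ZMod.castHom (Dvd.intro_left d hn) (ZMod m) '' LSet n q := by
  obtain ⟨hd, hm⟩ : d ≠ 0 ∧ m ≠ 0 := mul_ne_zero_iff.1 (hn ▸ NeZero.ne n)
  obtain ⟨k, hkc, hkv, hk, hJ⟩ := exists_modEq_modEq_jacobiSym_eq_mul hd hm hdm hc hv
  rw [hn] at hk hJ
  refine ⟨k, (natCast_mem_LSet_iff hq).2 ⟨hk, hJ.trans (hL k hkc hkv)⟩, ?_⟩
  rw [map_natCast]
  exact (ZMod.natCast_eq_natCast_iff k v m).2 hkv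

theorem USet_subset_image_LSet_of_dvd_right (hn : d * m = n) (hdm : d.Coprime m) (hodd : Odd d)
    (hd : ¬IsSquare d) (hq : q ∣ m) :
    USet m ⊆ ZMod.castHom (Dvd.intro_left d hn) (ZMod m) '' LSet n q := by
  intro a ha
  have hm : m ≠ 0 := right_ne_zero_of_mul (hn ▸ NeZero.ne n)
  have : NeZero m := ⟨hm⟩
  obtain ⟨v, rfl⟩ := ZMod.natCast_zmod_surjective a
  have hv : v.Coprime m := natCast_mem_USet_iff.1 ha
  obtain ⟨c, hc, hJ⟩ :=
    exists_coprime_jacobiSym_eq hodd hd (hv.mul_right (hv.coprime_dvd_right hq))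
  refine natCast_mem_image_LSet hn hdm (hq.trans (Dvd.intro_left d hn)) hc hv fun k _ hkv ↦ ?_
  calc J(c | d) * J(v | m) = J(v | m) ^ 2 * J(v | q) := by
        rw [hJ, jacobiSym.mul_right' _ hm (ne_zero_of_dvd_ne_zero hm hq)]
        ring
    _ = J(v | q) := by rw [jacobiSym.sq_one (a := v) hv, one_mul]
    _ = J(k | q) := (jacobiSym_congr (hkv.of_dvd hq)).symm

theorem JSet_subset_image_LSet_of_dvd_left (hn : d * m = n) (hdm : d.Coprime m) (hq : q ∣ d) :
    JSet m ⊆ ZMod.castHom (Dvd.intro_left d hn) (ZMod m) '' LSet n q := by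
  intro a ha
  have : NeZero m := ⟨right_ne_zero_of_mul (hn ▸ NeZero.ne n)⟩
  obtain ⟨v, rfl⟩ := ZMod.natCast_zmod_surjective a
  obtain ⟨hv, hJ⟩ := natCast_mem_JSet_iff.1 ha
  refine natCast_mem_image_LSet hn hdm (hq.trans (Dvd.intro m hn)) (Nat.coprime_one_left d) hv
    fun k hk _ ↦ ?_
  rw [hJ, jacobiSym_congr (hk.of_dvd hq), Nat.cast_one, jacobiSym.one_left, jacobiSym.one_left,
    mul_one]

end Image

theorem sset_subset_image_L_general {n d q : ℕ} (hodd : Odd n) (hdn : d ∣ n) (hd : ¬IsSquare d)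
    (hcop : d.Coprime (n / d)) (hq : q ∣ d ∨ q ∣ n / d) :
    JSet (n / d) ⊆ ZMod.castHom (Nat.div_dvd_of_dvd hdn) (ZMod (n / d)) '' LSet n q := by
  have : NeZero n := ⟨hodd.pos.ne'⟩
  have hn : d * (n / d) = n := Nat.mul_div_cancel' hdn
  rcases hq with hqd | hqm
  · exact JSet_subset_image_LSet_of_dvd_left hn hcop hqd
  · have hJU : JSet (n / d) ⊆ USet (n / d) := fun _ ha ↦ ha.1
    exact hJU.trans
      (USet_subset_image_LSet_of_dvd_right hn hcop (hodd.of_dvd_nat hdn) hd hqm)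

theorem sset_subset_image_L (n p' p : ℕ) (hodd : Odd n)
    (hp' : p'.Prime) (hp'n : p' ∣ n) (hp : p.Prime) (hpn : p ∣ n)
    (hcop : Nat.Coprime p (n / p)) :
    JSet (n / p) ⊆
      (ZMod.castHom (Nat.div_dvd_of_dvd hpn) (ZMod (n / p))) '' LSet n p' := by
  have hdvd : p' ∣ p ∨ p' ∣ n / p := hp'.dvd_mul.1 (by rwa [Nat.mul_div_cancel' hpn])
  exact sset_subset_image_L_general hodd hpn hp.prime.not_isSquare hcop hdvd
end

section
/- Let n be odd and squarefree with every prime divisor of n at least 7 and Ω(n) ≠ 2, let p' be a prime divisor of n, and let A = L(n;p'). Then D_A(n) = Ω(n) + 1. -/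
open scoped BigOperators

/-!
Let `m` be the cofactor of the given prime in `n`, so that the weights are the units `a` with
`(a/m) = 1`. By the Chinese remainder theorem a zero sum over an index set `I` is a zero sum modulo
each prime `p ∣ n`, and the weights modulo the various `p` only interact through the requirement
that, for every `i ∈ I`, the quadratic characters of the `i`-th weight modulo the primes `p ∣ m`
multiply to `1`.

Fix `p` and let `T ⊆ I` be the set of indices where the sequence is nonzero modulo `p`. If `#T ≥ 3`
or `T = ∅`, and `p ≥ 7`, a zero sum exists for every choice of characters, since the Jacobi sum of
the quadratic character shows that `t` and `1 - t` can take any prescribed pair of characters. If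
`#T = 2`, the characters can be prescribed at all but one index `c ∈ T`, which may be chosen freely.
A wrong sign at `c` is corrected at a second prime whose support misses `c`, where the character at
`c` is irrelevant. So it is enough to find `I` such that no support has exactly one element and the
supports for `p ∣ m` are not all the same pair. Starting from more than `Ω(n)` indices, one deletes
an index for each prime with a singleton support, and deletes the pair if it is common; the latter
is affordable because `Ω(n) ≠ 2` means that a common pair is shared by at least two primes.

For the lower bound, the idempotents of the Chinese remainder decomposition have no weighted zero
sum.
-/

namespace WeightedZeroSum

open Finset Function
open scoped Pointwise

section Combinatorics

variable {ι κ : Type*} [DecidableEq ι] {s : κ → Finset ι} {P Q : Finset κ} {I J : Finset ι}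

theorem exists_erase_inter_eq_empty {s : Finset ι} (h : #(J ∩ s) = 1) :
    ∃ j ∈ J, J.erase j ∩ s = ∅ := by
  obtain ⟨j, hj⟩ := card_eq_one.1 h
  have hmem : j ∈ J ∩ s := hj ▸ mem_singleton_self j
  exact ⟨j, mem_of_mem_inter_left hmem, by rw [erase_inter, hj, erase_singleton]⟩

theorem inter_eq_empty_of_subset {s : Finset ι} (hIJ : I ⊆ J) (hJ : J ∩ s = ∅) : I ∩ s = ∅ :=
  subset_empty.1 (hJ ▸ inter_subset_inter_right hIJ)

theorem card_inter_ne_one_of_erase [DecidableEq κ] {q : κ} (hq : I ∩ s q = ∅)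
    (h : ∀ p ∈ P.erase q, #(I ∩ s p) ≠ 1) : ∀ p ∈ P, #(I ∩ s p) ≠ 1 := by
  intro p hp
  obtain rfl | hpq := eq_or_ne p q
  · simp [hq]
  · exact h p (mem_erase.2 ⟨hpq, hp⟩)

theorem exists_subset_card_inter_ne_one (s : κ → Finset ι) (hPJ : #P < #J) :
    ∃ I ⊆ J, I.Nonempty ∧ ∀ p ∈ P, #(I ∩ s p) ≠ 1 := by
  classical
  induction P using Finset.strongInduction generalizing J with
  | H P ih =>
    by_cases! h : ∃ p ∈ P, #(J ∩ s p) = 1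
    · obtain ⟨p, hp, hcard⟩ := h
      obtain ⟨j, hj, hempty⟩ := exists_erase_inter_eq_empty hcard
      obtain ⟨I, hIJ, hI, hne⟩ := ih (P.erase p) (erase_ssubset hp) (J := J.erase j) (by grind)
      exact ⟨I, hIJ.trans (erase_subset _ _), hI,
        card_inter_ne_one_of_erase (inter_eq_empty_of_subset hIJ hempty) hne⟩
    · exact ⟨J, Subset.rfl, card_pos.1 (by lia), h⟩

theorem exists_subset_card_inter_ne_one_and_ne_pair (s : κ → Finset ι) (hQP : Q ⊆ P)
    (hQ : 2 ≤ #Q) (hPJ : #P < #J) :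
    ∃ I ⊆ J, I.Nonempty ∧ (∀ p ∈ P, #(I ∩ s p) ≠ 1) ∧
      ∀ T, #T = 2 → ∃ q ∈ Q, I ∩ s q ≠ T := by
  classical
  induction P using Finset.strongInduction generalizing J with
  | H P ih =>
    by_cases! h : ∃ p ∈ P, #(J ∩ s p) = 1
    · obtain ⟨p, hp, hcard⟩ := h
      obtain ⟨j, hj, hempty⟩ := exists_erase_inter_eq_empty hcard
      have hlt : #(P.erase p) < #(J.erase j) := by grind
      by_cases hpQ : p ∈ Q
      · obtain ⟨I, hIJ, hI, hne⟩ := exists_subset_card_inter_ne_one s hlt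
        have hIp : I ∩ s p = ∅ := inter_eq_empty_of_subset hIJ hempty
        exact ⟨I, hIJ.trans (erase_subset _ _), hI, card_inter_ne_one_of_erase hIp hne,
          fun T hT => ⟨p, hpQ, by grind⟩⟩
      · obtain ⟨I, hIJ, hI, hne, hpair⟩ :=
          ih (P.erase p) (erase_ssubset hp) (subset_erase.2 ⟨hQP, hpQ⟩) hlt
        exact ⟨I, hIJ.trans (erase_subset _ _), hI,
          card_inter_ne_one_of_erase (inter_eq_empty_of_subset hIJ hempty) hne, hpair⟩
    · by_cases! hpair : ∃ T, #T = 2 ∧ ∀ q ∈ Q, J ∩ s q = T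
      · -- Discarding the common pair costs two indices but frees all of `Q`, and `2 ≤ #Q`.
        obtain ⟨T, hT, hJT⟩ := hpair
        obtain ⟨q₀, hq₀⟩ : Q.Nonempty := card_pos.1 (by lia)
        have hTJ : T ⊆ J := hJT q₀ hq₀ ▸ inter_subset_left
        have hlt : #(P \ Q) < #(J \ T) := by
          rw [card_sdiff_of_subset hQP, card_sdiff_of_subset hTJ]
          have := card_le_card hQP
          lia
        obtain ⟨I, hIJ, hI, hne⟩ := exists_subset_card_inter_ne_one s hlt
        have hIQ : ∀ q ∈ Q, I ∩ s q = ∅ := fun q hq =>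
          inter_eq_empty_of_subset hIJ (by grind)
        refine ⟨I, hIJ.trans sdiff_subset, hI, fun p hp => ?_, fun U hU => ⟨q₀, hq₀, by grind⟩⟩
        by_cases hpQ : p ∈ Q
        · simp [hIQ p hpQ]
        · exact hne p (mem_sdiff.2 ⟨hp, hpQ⟩)
      · exact ⟨J, Subset.rfl, card_pos.1 (by lia), h, hpair⟩

end Combinatorics

section QuadraticChar

variable {F : Type*} [Field F] [Fintype F] [DecidableEq F]

theorem exists_quadraticChar_eq_unit {a : F} (ha : a ≠ 0) : ∃ u : ℤˣ, quadraticChar F a = u := by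
  obtain h | h := quadraticChar_dichotomy ha
  · exact ⟨1, h⟩
  · exact ⟨-1, h⟩

theorem ne_zero_of_quadraticChar_eq {a : F} {u : ℤˣ} (h : quadraticChar F a = u) : a ≠ 0 := by
  rintro rfl
  exact u.ne_zero (h.symm.trans (MulChar.map_zero _))

theorem exists_quadraticChar_eq (hF : ringChar F ≠ 2) (e : ℤˣ) : ∃ a, quadraticChar F a = e := by
  obtain rfl | rfl := Int.units_eq_one_or e
  · exact ⟨1, by simp⟩
  · simpa using quadraticChar_exists_neg_one hF

theorem one_add_mul_quadraticChar_eq_zero {a : F} (ha : a ≠ 0) {e : ℤˣ}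
    (h : quadraticChar F a ≠ e) : 1 + e * quadraticChar F a = 0 := by
  obtain ⟨u, hu⟩ := exists_quadraticChar_eq_unit ha
  rw [hu] at h ⊢
  obtain rfl | rfl := Int.units_eq_one_or e <;> obtain rfl | rfl := Int.units_eq_one_or u <;>
    simp_all

theorem sum_one_add_quadraticChar_mul_one_add (hF : ringChar F ≠ 2) (e d : ℤ) :
    ∑ t : F, (1 + e * quadraticChar F t) * (1 + d * quadraticChar F (1 - t)) =
      Fintype.card F - e * d * quadraticChar F (-1) := by
  have hsum : ∑ t : F, quadraticChar F t = 0 := quadraticChar_sum_zero hF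
  have hsum' : ∑ t : F, quadraticChar F (1 - t) = 0 :=
    (Equiv.sum_comp (Equiv.subLeft (1 : F)) _).trans hsum
  have hjacobi : ∑ t : F, quadraticChar F t * quadraticChar F (1 - t) = -quadraticChar F (-1) := by
    have h := jacobiSum_nontrivial_inv (quadraticChar_ne_one hF)
    rwa [(quadraticChar_isQuadratic F).inv] at h
  calc ∑ t : F, (1 + e * quadraticChar F t) * (1 + d * quadraticChar F (1 - t))
    _ = ∑ t : F, (1 + e * quadraticChar F t + d * quadraticChar F (1 - t) +
          e * d * (quadraticChar F t * quadraticChar F (1 - t))) :=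
      sum_congr rfl fun t _ => by ring
    _ = Fintype.card F - e * d * quadraticChar F (-1) := by
      simp only [sum_add_distrib, ← mul_sum, hsum, hsum', hjacobi]
      simp [sub_eq_add_neg]

theorem exists_quadraticChar_eq_and_one_sub_eq (hF : ringChar F ≠ 2) (hcard : 5 < Fintype.card F)
    (e d : ℤˣ) : ∃ t : F, quadraticChar F t = e ∧ quadraticChar F (1 - t) = d := by
  by_contra! hno
  have hvanish : ∀ t : F, t ∉ ({0, 1} : Finset F) →
      (1 + e * quadraticChar F t) * (1 + d * quadraticChar F (1 - t)) = 0 := by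
    intro t ht
    simp only [mem_insert, mem_singleton, not_or] at ht
    by_cases h : quadraticChar F t = e
    · rw [one_add_mul_quadraticChar_eq_zero (sub_ne_zero.2 (Ne.symm ht.2)) (hno t h), mul_zero]
    · rw [one_add_mul_quadraticChar_eq_zero ht.1 h, zero_mul]
  have hsum := sum_one_add_quadraticChar_mul_one_add hF e d
  rw [← sum_subset (subset_univ _) (fun t _ => hvanish t), sum_pair zero_ne_one] at hsum
  obtain ⟨u, hu⟩ := exists_quadraticChar_eq_unit (neg_ne_zero.2 (one_ne_zero (α := F)))
  simp only [hu, MulChar.map_zero, map_one, sub_zero, sub_self] at hsum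
  obtain rfl | rfl := Int.units_eq_one_or e <;> obtain rfl | rfl := Int.units_eq_one_or d <;>
    obtain rfl | rfl := Int.units_eq_one_or u <;> simp at hsum <;> lia

theorem quadraticChar_mul_eq {a b : F} {e σ : ℤˣ} (ha : quadraticChar F a = ↑(e * σ))
    (hb : quadraticChar F b = σ) : quadraticChar F (a * b) = e := by
  rw [map_mul, ha, hb, ← Units.val_mul, mul_assoc, Int.units_mul_self, mul_one]

theorem exists_quadraticChar_add_eq (hF : ringChar F ≠ 2) (hcard : 5 < Fintype.card F)
    (e d : ℤˣ) {s : F} (hs : s ≠ 0) :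
    ∃ u v, quadraticChar F u = e ∧ quadraticChar F v = d ∧ u + v = s := by
  obtain ⟨σ, hσ⟩ := exists_quadraticChar_eq_unit hs
  obtain ⟨t, ht, ht'⟩ := exists_quadraticChar_eq_and_one_sub_eq hF hcard (e * σ) (d * σ)
  exact ⟨t * s, (1 - t) * s, quadraticChar_mul_eq ht hσ, quadraticChar_mul_eq ht' hσ, by ring⟩

variable {ι : Type*} {T : Finset ι}

theorem exists_quadraticChar_sum_insert_eq [DecidableEq ι] {a : ι} (ha : a ∉ T)
    {e : ι → ℤˣ} {z : F} (hz : quadraticChar F z = e a) {y : ι → F}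
    (hy : ∀ i, quadraticChar F (y i) = e i) :
    ∃ y' : ι → F, (∀ i, quadraticChar F (y' i) = e i) ∧
      ∑ i ∈ insert a T, y' i = z + ∑ i ∈ T, y i := by
  refine ⟨update y a z, ?_, ?_⟩
  · rw [forall_update_iff y fun i b => quadraticChar F b = e i]
    exact ⟨hz, fun i _ => hy i⟩
  · rw [sum_insert ha, update_self, sum_update_of_notMem ha]

theorem exists_quadraticChar_sum_eq (hF : ringChar F ≠ 2) (hcard : 5 < Fintype.card F)
    (hT : 2 ≤ #T) (e : ι → ℤˣ) {s : F} (hs : s ≠ 0) :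
    ∃ y : ι → F, (∀ i, quadraticChar F (y i) = e i) ∧ ∑ i ∈ T, y i = s := by
  classical
  induction T using Finset.induction generalizing s with
  | empty => simp at hT
  | insert a T ha ih =>
    rw [card_insert_of_notMem ha] at hT
    suffices ∃ z, quadraticChar F z = e a ∧
        ∃ y : ι → F, (∀ i, quadraticChar F (y i) = e i) ∧ ∑ i ∈ T, y i = s - z by
      obtain ⟨z, hz, y, hy, hsum⟩ := this
      obtain ⟨y', hy', hsum'⟩ := exists_quadraticChar_sum_insert_eq ha hz hy
      exact ⟨y', hy', by rw [hsum', hsum, add_sub_cancel]⟩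
    by_cases hT1 : #T = 1
    · obtain ⟨b, rfl⟩ := card_eq_one.1 hT1
      obtain ⟨z, v, hz, hv, hzv⟩ := exists_quadraticChar_add_eq hF hcard (e a) (e b) hs
      choose y hy using fun i => exists_quadraticChar_eq hF (e i)
      obtain ⟨y', hy', hsum⟩ := exists_quadraticChar_sum_insert_eq (notMem_empty b) hv hy
      exact ⟨z, hz, y', hy', by simpa [← hzv] using hsum⟩
    · obtain ⟨z, v, hz, hv, hzv⟩ := exists_quadraticChar_add_eq hF hcard (e a) 1 hs
      refine ⟨z, hz, ih (by lia) ?_⟩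
      rw [← hzv, add_sub_cancel_left]
      exact ne_zero_of_quadraticChar_eq hv

theorem exists_quadraticChar_sum_eq_zero (hF : ringChar F ≠ 2) (hcard : 5 < Fintype.card F)
    (hT : 3 ≤ #T) (e : ι → ℤˣ) :
    ∃ y : ι → F, (∀ i, quadraticChar F (y i) = e i) ∧ ∑ i ∈ T, y i = 0 := by
  classical
  obtain ⟨a, ha⟩ : T.Nonempty := card_pos.1 (by lia)
  obtain ⟨z, hz⟩ := exists_quadraticChar_eq hF (e a)
  have hz₀ : -z ≠ 0 := neg_ne_zero.2 (ne_zero_of_quadraticChar_eq hz)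
  obtain ⟨y, hy, hsum⟩ := exists_quadraticChar_sum_eq hF hcard (T := T.erase a) (by grind) e hz₀
  obtain ⟨y', hy', hsum'⟩ := exists_quadraticChar_sum_insert_eq (notMem_erase a T) hz hy
  rw [insert_erase ha, hsum, add_neg_cancel] at hsum'
  exact ⟨y', hy', hsum'⟩

end QuadraticChar

section SignPatterns

variable {ι F : Type*} [Field F] [Fintype F] [DecidableEq F] {I : Finset ι} {x : ι → F}

/-- The sign patterns with which `x` admits a weighted zero sum over `I`: the families `e` for
which some weights `w i` of quadratic character `e i` satisfy `∑ i ∈ I, w i * x i = 0`. Patterns are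
indexed by all of `ι`, not just by `I`, so that they form a subset of the group `ι → ℤˣ`. -/
def signPatterns (I : Finset ι) (x : ι → F) : Set (ι → ℤˣ) :=
  {e | ∃ w : ι → F, (∀ i, quadraticChar F (w i) = e i) ∧ ∑ i ∈ I, w i * x i = 0}

theorem signPatterns_eq_univ (hF : ringChar F ≠ 2) (hcard : 5 < Fintype.card F)
    (h₁ : #{i ∈ I | x i ≠ 0} ≠ 1) (h₂ : #{i ∈ I | x i ≠ 0} ≠ 2) :
    signPatterns I x = Set.univ := by
  refine Set.eq_univ_of_forall fun e => ?_
  have hzero (e : ι → ℤˣ) : ∃ y : ι → F, (∀ i, quadraticChar F (y i) = e i) ∧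
      ∑ i ∈ I with x i ≠ 0, y i = 0 := by
    by_cases h₀ : #{i ∈ I | x i ≠ 0} = 0
    · choose y hy using fun i => exists_quadraticChar_eq hF (e i)
      exact ⟨y, hy, by rw [card_eq_zero.1 h₀, sum_empty]⟩
    · exact exists_quadraticChar_sum_eq_zero hF hcard (by lia) e
  -- Substitute `y i = w i * x i` on the support of `x`.
  let z : ι → F := fun i => if x i = 0 then 1 else (x i)⁻¹
  have hz (i : ι) : z i ≠ 0 := by grind
  choose σ hσ using fun i => exists_quadraticChar_eq_unit (hz i)
  obtain ⟨y, hy, hsum⟩ := hzero (e * σ)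
  refine ⟨fun i => y i * z i, fun i => quadraticChar_mul_eq (hy i) (hσ i), ?_⟩
  rw [← hsum, sum_filter]
  refine sum_congr rfl fun i _ => ?_
  by_cases hi : x i = 0 <;> simp [z, hi]

theorem mem_signPatterns_of_apply_eq_zero (hF : ringChar F ≠ 2) {c : ι} (hc : x c = 0)
    {e e' : ι → ℤˣ} (he : e ∈ signPatterns I x) (heq : ∀ i ≠ c, e' i = e i) :
    e' ∈ signPatterns I x := by
  classical
  obtain ⟨w, hw, hsum⟩ := he
  obtain ⟨a, ha⟩ := exists_quadraticChar_eq hF (e' c)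
  refine ⟨update w c a, ?_, ?_⟩
  · rw [forall_update_iff w fun i b => quadraticChar F b = e' i]
    exact ⟨ha, fun i hi => by rw [hw, heq i hi]⟩
  · rw [← hsum]
    refine sum_congr rfl fun i _ => ?_
    obtain rfl | hi := eq_or_ne i c
    · rw [hc, mul_zero, mul_zero]
    · rw [update_of_ne hi]

theorem exists_mem_signPatterns_of_sum_erase_ne_zero [DecidableEq ι] {c : ι} (hcI : c ∈ I)
    (hc : x c ≠ 0) {w : ι → F} {e : ι → ℤˣ} (hw : ∀ i, quadraticChar F (w i) = e i)
    (hsum : ∑ i ∈ I.erase c, w i * x i ≠ 0) :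
    ∃ e' ∈ signPatterns I x, ∀ i ≠ c, e' i = e i := by
  set v : F := -(∑ i ∈ I.erase c, w i * x i) / x c with hv
  obtain ⟨u, hu⟩ := exists_quadraticChar_eq_unit (div_ne_zero (neg_ne_zero.2 hsum) hc)
  refine ⟨update e c u, ⟨update w c v, fun i => ?_, ?_⟩, fun i hi => update_of_ne hi _ _⟩
  · obtain rfl | hi := eq_or_ne i c
    · simpa using hu
    · simpa [hi] using hw i
  · have hrest : ∑ i ∈ I.erase c, update w c v i * x i = ∑ i ∈ I.erase c, w i * x i :=
      sum_congr rfl fun i hi => by rw [update_of_ne (ne_of_mem_erase hi)]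
    rw [← add_sum_erase I _ hcI, hrest, update_self, hv, div_mul_cancel₀ _ hc, neg_add_cancel]

theorem exists_mem_signPatterns_of_card_eq_two (hF : ringChar F ≠ 2)
    (h₂ : #{i ∈ I | x i ≠ 0} = 2) {c : ι} (hcI : c ∈ I) (hc : x c ≠ 0) (e : ι → ℤˣ) :
    ∃ e' ∈ signPatterns I x, ∀ i ≠ c, e' i = e i := by
  classical
  choose w hw using fun i => exists_quadraticChar_eq hF (e i)
  obtain ⟨d, hd⟩ : ∃ d, {i ∈ I | x i ≠ 0}.erase c = {d} :=
    card_eq_one.1 (by rw [card_erase_of_mem (by simp [hcI, hc]), h₂])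
  have hmem (i : ι) : (i ≠ c ∧ i ∈ I ∧ x i ≠ 0) ↔ i = d := by
    simpa using Finset.ext_iff.1 hd i
  obtain ⟨hdc, hdI, hd₀⟩ := (hmem d).2 rfl
  refine exists_mem_signPatterns_of_sum_erase_ne_zero hcI hc hw ?_
  rw [sum_eq_single_of_mem d (mem_erase.2 ⟨hdc, hdI⟩) fun i hi hid => by grind]
  exact mul_ne_zero (ne_zero_of_quadraticChar_eq (hw d)) hd₀

theorem signPatterns_nonempty (hF : ringChar F ≠ 2) (h₁ : #{i ∈ I | x i ≠ 0} ≠ 1) :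
    (signPatterns I x).Nonempty := by
  classical
  by_cases h₀ : #{i ∈ I | x i ≠ 0} = 0
  · have hx : ∀ i ∈ I, x i = 0 := by simpa [filter_eq_empty_iff] using h₀
    exact ⟨1, 1, by simp, sum_eq_zero fun i hi => by rw [hx i hi, mul_zero]⟩
  obtain ⟨c, hc, d, hd, hcd⟩ := one_lt_card.1 (by lia : 1 < #{i ∈ I | x i ≠ 0})
  rw [mem_filter] at hc hd
  suffices ∃ w : ι → F, (∀ i, w i ≠ 0) ∧ ∑ i ∈ I.erase c, w i * x i ≠ 0 by
    obtain ⟨w, hw, hsum⟩ := this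
    choose e he using fun i => exists_quadraticChar_eq_unit (hw i)
    obtain ⟨e', he', -⟩ := exists_mem_signPatterns_of_sum_erase_ne_zero hc.1 hc.2 he hsum
    exact ⟨e', he'⟩
  by_cases hsum : ∑ i ∈ I.erase c, x i = 0
  · refine ⟨fun i => if i = d then 2 else 1, fun i => ?_, ?_⟩
    · have := Ring.two_ne_zero hF
      grind
    · have hsplit (i : ι) : (if i = d then 2 else 1) * x i = x i + if i = d then x i else 0 := by
        split_ifs <;> ring
      simp only [hsplit, sum_add_distrib, hsum, sum_ite_eq', mem_erase]
      simpa [hcd.symm, hd.1] using hd.2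
  · exact ⟨1, by simp, by simpa using hsum⟩

theorem signPatterns_mul_signPatterns_eq_univ {K : Type*} [Field K] [Fintype K] [DecidableEq K]
    {y : ι → K} (hF : ringChar F ≠ 2) (hK : ringChar K ≠ 2) (hx : #{i ∈ I | x i ≠ 0} = 2)
    (hy : #{i ∈ I | y i ≠ 0} ≠ 1) {c : ι} (hcI : c ∈ I) (hxc : x c ≠ 0) (hyc : y c = 0) :
    signPatterns I x * signPatterns I y = Set.univ := by
  refine Set.eq_univ_of_forall fun t => ?_
  obtain ⟨b, hb⟩ := signPatterns_nonempty hK hy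
  obtain ⟨a, ha, hab⟩ := exists_mem_signPatterns_of_card_eq_two hF hx hcI hxc (t * b⁻¹)
  refine Set.mem_mul.2 ⟨a, ha, a⁻¹ * t, ?_, mul_inv_cancel_left a t⟩
  exact mem_signPatterns_of_apply_eq_zero hK hyc hb fun i hi => by
    rw [Pi.mul_apply, Pi.inv_apply, hab i hi, Pi.mul_apply, Pi.inv_apply, mul_inv_rev, inv_inv,
      inv_mul_cancel_right]

end SignPatterns

section FieldFamily

theorem exists_forall_mem_prod_eq_one {G κ : Type*} [CommGroup G] {R : κ → Set G}
    (hR : ∀ k, (R k).Nonempty) {Q : Finset κ} {q r : κ} (hq : q ∈ Q) (hr : r ∈ Q) (hqr : q ≠ r)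
    (hmul : R q * R r = Set.univ) : ∃ ε : κ → G, (∀ k, ε k ∈ R k) ∧ ∏ k ∈ Q, ε k = 1 := by
  classical
  choose ε hε using hR
  obtain ⟨a, ha, b, hb, hab⟩ :=
    Set.mem_mul.1 (hmul ▸ Set.mem_univ (∏ k ∈ (Q.erase q).erase r, ε k)⁻¹)
  refine ⟨update (update ε q a) r b, fun k => ?_, ?_⟩
  · grind
  · have hrest : ∏ k ∈ (Q.erase q).erase r, update (update ε q a) r b k =
        ∏ k ∈ (Q.erase q).erase r, ε k := prod_congr rfl fun k hk => by grind
    rw [← mul_prod_erase Q _ hq, ← mul_prod_erase (Q.erase q) _ (mem_erase.2 ⟨hqr.symm, hr⟩),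
      hrest, update_self, update_of_ne hqr, update_self, ← mul_assoc, hab, inv_mul_cancel]

variable {ι κ : Type*} {F : κ → Type*} [∀ k, Field (F k)] [∀ k, Fintype (F k)]
  [∀ k, DecidableEq (F k)] {Q : Finset κ}

theorem exists_signPatterns_prod_eq_one {I : Finset ι} {x : ∀ k, ι → F k}
    (hF : ∀ k, ringChar (F k) ≠ 2) (hcard : ∀ q ∈ Q, 5 < Fintype.card (F q)) (hQ : 2 ≤ #Q)
    (h₁ : ∀ k, #{i ∈ I | x k i ≠ 0} ≠ 1)
    (hpair : ∀ T, #T = 2 → ∃ q ∈ Q, {i ∈ I | x q i ≠ 0} ≠ T) :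
    ∃ ε : κ → ι → ℤˣ, (∀ k, ε k ∈ signPatterns I (x k)) ∧ ∏ q ∈ Q, ε q = 1 := by
  have hne (k : κ) : (signPatterns I (x k)).Nonempty := signPatterns_nonempty (hF k) (h₁ k)
  by_cases! h₂ : ∃ q ∈ Q, #{i ∈ I | x q i ≠ 0} ≠ 2
  · obtain ⟨q, hq, hq₂⟩ := h₂
    obtain ⟨r, hr, hrq⟩ := exists_mem_ne hQ q
    refine exists_forall_mem_prod_eq_one hne hq hr hrq.symm ?_
    rw [signPatterns_eq_univ (hF q) (hcard q hq) (h₁ q) hq₂, Set.univ_mul (hne r)]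
  · obtain ⟨q, hq⟩ : Q.Nonempty := card_pos.1 (by lia)
    obtain ⟨r, hr, hrq⟩ := hpair _ (h₂ q hq)
    obtain ⟨c, hcq, hcr⟩ : ∃ c ∈ {i ∈ I | x q i ≠ 0}, c ∉ {i ∈ I | x r i ≠ 0} := by
      by_contra! hsub
      exact hrq (eq_of_subset_of_card_le hsub (by rw [h₂ q hq, h₂ r hr])).symm
    obtain ⟨hcI, hcq⟩ := mem_filter.1 hcq
    have hcr : x r c = 0 := by simpa [hcI] using hcr
    refine exists_forall_mem_prod_eq_one hne hq hr (by rintro rfl; exact hcq hcr) ?_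
    exact signPatterns_mul_signPatterns_eq_univ (hF q) (hF r) (h₂ q hq) (h₁ r) hcI hcq hcr

theorem exists_weighted_sum_eq_zero [Fintype ι] [Fintype κ] (hF : ∀ k, ringChar (F k) ≠ 2)
    (hcard : ∀ q ∈ Q, 5 < Fintype.card (F q)) (hQ : #Q ≠ 1)
    (hκι : Fintype.card κ < Fintype.card ι) (S : ι → ∀ k, F k) :
    ∃ I : Finset ι, I.Nonempty ∧ ∃ w : ι → ∀ k, F k,
      (∀ i, IsUnit (w i) ∧ ∏ q ∈ Q, quadraticChar (F q) (w i q) = 1) ∧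
        ∑ i ∈ I, w i * S i = 0 := by
  classical
  suffices ∃ I : Finset ι, I.Nonempty ∧ ∃ ε : κ → ι → ℤˣ,
      (∀ k, ε k ∈ signPatterns I (S · k)) ∧ ∏ q ∈ Q, ε q = 1 by
    obtain ⟨I, hI, ε, hε, hprod⟩ := this
    choose w hw hsum using hε
    refine ⟨I, hI, fun i k => w k i, fun i => ⟨?_, ?_⟩, funext fun k => by simpa using hsum k⟩
    · exact Pi.isUnit_iff.2 fun k => (ne_zero_of_quadraticChar_eq (hw k i)).isUnit
    · simpa [hw] using congrArg Units.val (congrFun hprod i)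
  let s : κ → Finset ι := fun k => {i | S i k ≠ 0}
  have hs (I : Finset ι) (k : κ) : I ∩ s k = {i ∈ I | S i k ≠ 0} := by ext; simp [s]
  have hlt : #(univ : Finset κ) < #(univ : Finset ι) := by simpa using hκι
  obtain hQ₀ | hQ₂ : #Q = 0 ∨ 2 ≤ #Q := by lia
  · obtain ⟨I, -, hI, h₁⟩ := exists_subset_card_inter_ne_one s hlt
    simp only [hs, mem_univ, true_imp_iff] at h₁
    choose ε hε using fun k => signPatterns_nonempty (hF k) (h₁ k)
    exact ⟨I, hI, ε, hε, by rw [card_eq_zero.1 hQ₀, prod_empty]⟩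
  · obtain ⟨I, -, hI, h₁, hpair⟩ :=
      exists_subset_card_inter_ne_one_and_ne_pair s (subset_univ Q) hQ₂ hlt
    simp only [hs, mem_univ, true_imp_iff] at h₁ hpair
    exact ⟨I, hI, exists_signPatterns_prod_eq_one hF hcard hQ₂ h₁ hpair⟩

end FieldFamily

theorem sum_mul_single_ne_zero {ι κ : Type*} [DecidableEq κ] {R : κ → Type*}
    [∀ k, Semiring (R k)] [∀ k, Nontrivial (R k)] (f : ι ↪ κ) {I : Finset ι} (hI : I.Nonempty)
    {w : ι → ∀ k, R k} (hw : ∀ i ∈ I, IsUnit (w i)) :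
    ∑ i ∈ I, w i * Pi.single (f i) 1 ≠ 0 := by
  intro hsum
  obtain ⟨j, hj⟩ := hI
  have hsum_j : ∑ i ∈ I, w i (f j) * Pi.single (M := R) (f i) 1 (f j) = 0 := by
    simpa using congrFun hsum (f j)
  rw [sum_eq_single_of_mem j hj fun i _ hij => by
    rw [Pi.single_eq_of_ne (f.injective.ne hij).symm, mul_zero], Pi.single_eq_same,
    mul_one] at hsum_j
  exact (Pi.isUnit_iff.1 (hw j hj) (f j)).ne_zero hsum_j

section ZMod

variable {n m : ℕ}

instance fact_prime_of_primeFactors (p : n.primeFactors) : Fact (p : ℕ).Prime :=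
  ⟨Nat.prime_of_mem_primeFactors p.2⟩

theorem prod_primeFactors_coe (hn : Squarefree n) : ∏ p : n.primeFactors, (p : ℕ) = n := by
  rw [prod_coe_sort n.primeFactors fun p => p, Nat.prod_primeFactors_of_squarefree hn]

/-- The Chinese remainder isomorphism sending a residue modulo a squarefree `n` to its residues
modulo the prime divisors of `n`. -/
noncomputable def residueEquiv (hn : Squarefree n) : ZMod n ≃+* ∀ p : n.primeFactors, ZMod p :=
  (ZMod.ringEquivCongr (prod_primeFactors_coe hn).symm).trans <|
    ZMod.prodEquivPi (fun p : n.primeFactors => (p : ℕ)) fun p _ hpq =>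
      (Nat.coprime_primes (Fact.out : (p : ℕ).Prime) Fact.out).2 (Subtype.coe_injective.ne hpq)

theorem residueEquiv_apply (hn : Squarefree n) (a : ZMod n) (p : n.primeFactors) :
    residueEquiv hn a p = (a.val : ZMod p) := by
  have : NeZero n := ⟨hn.ne_zero⟩
  conv_lhs => rw [← ZMod.natCast_zmod_val a]
  rw [map_natCast, Pi.natCast_apply]

theorem jacobiSym_eq_prod_primeFactors (hm : Squarefree m) (a : ℤ) :
    jacobiSym a m = ∏ p ∈ m.primeFactors, jacobiSym a p := by
  have hne : ∀ p ∈ m.primeFactorsList, p ≠ 0 := fun p hp =>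
    (Nat.prime_of_mem_primeFactorsList hp).ne_zero
  conv_lhs => rw [← Nat.prod_primeFactorsList hm.ne_zero, jacobiSym.list_prod_right hne]
  exact (List.prod_toFinset _ hm.nodup_primeFactorsList).symm

theorem jacobiSym_val_eq_prod_quadraticChar (hn : Squarefree n) (hmn : m ∣ n) (a : ZMod n) :
    jacobiSym a.val m =
      ∏ p : n.primeFactors with p.1 ∣ m, quadraticChar (ZMod p) (residueEquiv hn a p) := by
  calc jacobiSym a.val m
    _ = ∏ p ∈ n.primeFactors with p ∣ m, jacobiSym a.val p := by
      rw [jacobiSym_eq_prod_primeFactors (hn.squarefree_of_dvd hmn),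
        Nat.primeFactors_filter_dvd_of_dvd hn.ne_zero hmn]
    _ = ∏ p : n.primeFactors with p.1 ∣ m, jacobiSym a.val p := by
      rw [prod_filter, prod_filter,
        prod_coe_sort n.primeFactors fun p => if p ∣ m then jacobiSym a.val p else 1]
    _ = ∏ p : n.primeFactors with p.1 ∣ m, quadraticChar (ZMod p) (residueEquiv hn a p) :=
      prod_congr rfl fun p _ => by
        rw [← jacobiSym.legendreSym.to_jacobiSym, legendreSym, residueEquiv_apply, Int.cast_natCast]

theorem card_primeFactors_eq_length (hn : Squarefree n) :
    #n.primeFactors = n.primeFactorsList.length :=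
  List.toFinset_card_of_nodup hn.nodup_primeFactorsList

theorem prime_of_card_primeFactors_eq_one (hm : Squarefree m) (h : #m.primeFactors = 1) :
    m.Prime := by
  obtain ⟨p, hp⟩ := card_eq_one.1 h
  rw [← Nat.prod_primeFactors_of_squarefree hm, hp, prod_singleton]
  exact Nat.prime_of_mem_primeFactors (hp ▸ mem_singleton_self p)

theorem card_filter_dvd_ne_one (hn : Squarefree n) (hmn : m ∣ n) (hm : ¬ m.Prime) :
    #{p : n.primeFactors | p.1 ∣ m} ≠ 1 := by
  intro h
  refine hm (prime_of_card_primeFactors_eq_one (hn.squarefree_of_dvd hmn) ?_)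
  rw [← h, ← Nat.primeFactors_filter_dvd_of_dvd hn.ne_zero hmn, card_filter, card_filter,
    sum_coe_sort n.primeFactors fun p => if p ∣ m then 1 else 0]

theorem length_primeFactorsList_eq_two {p : ℕ} (hp : p.Prime) (hpn : p ∣ n)
    (h : (n / p).Prime) : n.primeFactorsList.length = 2 := by
  obtain ⟨q, rfl⟩ := hpn
  rw [Nat.mul_div_cancel_left q hp.pos] at h
  rw [← ArithmeticFunction.cardFactors_apply,
    ArithmeticFunction.cardFactors_mul hp.ne_zero h.ne_zero,
    ArithmeticFunction.cardFactors_apply_prime hp,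
    ArithmeticFunction.cardFactors_apply_prime h]

end ZMod

section Davenport

variable {n m : ℕ} {A : Set (ZMod n)}

/-- The units `a` of `ZMod n` with Jacobi symbol `(a/m) = 1`, where `m` is meant to divide `n`. For
`m = n` this is `JSet n`, for `m = 1` it is `USet n`. -/
def jacobiWeights (n m : ℕ) : Set (ZMod n) := {a | IsUnit a ∧ jacobiSym (a.val : ℤ) m = 1}

theorem LSet_eq_jacobiWeights {p : ℕ} (hn : n ≠ 0) (hpn : p ∣ n) :
    LSet n p = jacobiWeights n (n / p) := by
  ext a
  refine and_congr_right fun ha => ?_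
  have : NeZero n := ⟨hn⟩
  have : NeZero p := ⟨ne_zero_of_dvd_ne_zero hn hpn⟩
  have hcop : a.val.Coprime n := by rwa [← ZMod.isUnit_iff_coprime, ZMod.natCast_zmod_val]
  have hne : jacobiSym a.val p ≠ 0 :=
    jacobiSym.ne_zero ((Int.gcd_natCast_natCast _ _).trans (hcop.coprime_dvd_right hpn))
  have hmul (v : ℤ) : jacobiSym v n = jacobiSym v p * jacobiSym v (n / p) := by
    have : NeZero (n / p) := ⟨(Nat.div_ne_zero_iff_of_dvd hpn).2 ⟨hn, NeZero.ne p⟩⟩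
    rw [← jacobiSym.mul_right, Nat.mul_div_cancel' hpn]
  rw [hmul, mul_eq_left₀ hne]

theorem hasWZSSub_jacobiWeights (hodd : Odd n) (hn : Squarefree n) (hmn : m ∣ n)
    (h7 : ∀ p : ℕ, p.Prime → p ∣ m → 7 ≤ p) (hm : ¬ m.Prime) {l : ℕ} (hl : #n.primeFactors < l)
    (S : Fin l → ZMod n) : HasWZSSub (jacobiWeights n m) S := by
  have hchar (p : n.primeFactors) : ringChar (ZMod p) ≠ 2 := by
    rw [ZMod.ringChar_zmod_n]
    exact (hodd.of_dvd_nat (Nat.dvd_of_mem_primeFactors p.2)).ne_two_of_dvd_nat dvd_rfl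
  obtain ⟨I, hI, w, hw, hsum⟩ := exists_weighted_sum_eq_zero hchar
    (Q := {p : n.primeFactors | p.1 ∣ m})
    (fun p hp => by
      have := h7 p Fact.out (mem_filter.1 hp).2
      rw [ZMod.card]
      lia)
    (card_filter_dvd_ne_one hn hmn hm) (by simpa using hl) (fun i => residueEquiv hn (S i))
  refine ⟨I, hI, fun i => (residueEquiv hn).symm (w i), fun i _ => ⟨(hw i).1.map _, ?_⟩, ?_⟩
  · simpa [jacobiSym_val_eq_prod_quadraticChar hn hmn] using (hw i).2
  · apply (residueEquiv hn).injective
    simpa using hsum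

theorem exists_not_hasWZSSub (hn : Squarefree n) (hA : A ⊆ USet n) {k : ℕ}
    (hk : k ≤ #n.primeFactors) : ∃ S : Fin k → ZMod n, ¬ HasWZSSub A S := by
  obtain ⟨f⟩ : Nonempty (Fin k ↪ n.primeFactors) :=
    Embedding.nonempty_of_card_le (by simpa using hk)
  refine ⟨fun i => (residueEquiv hn).symm (Pi.single (f i) 1), ?_⟩
  rintro ⟨I, hI, a, ha, hsum⟩
  refine sum_mul_single_ne_zero f hI (fun i hi => (hA (ha i hi)).map (residueEquiv hn)) ?_
  simpa using congrArg (residueEquiv hn) hsum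

theorem DavW_eq_add_one {d : ℕ} (hupper : ∀ S : Fin (d + 1) → ZMod n, HasWZSSub A S)
    (hlower : ∀ k ≤ d, ∃ S : Fin k → ZMod n, ¬ HasWZSSub A S) : DavW n A = d + 1 := by
  refine IsLeast.csInf_eq ⟨⟨d.succ_pos, hupper⟩, fun k hk => ?_⟩
  by_contra! hkd
  obtain ⟨S, hS⟩ := hlower k (Nat.le_of_lt_succ hkd)
  exact hS (hk.2 S)

end Davenport

end WeightedZeroSum

open WeightedZeroSum

theorem davenport_L_general (n m : ℕ) (hodd : Odd n) (hsf : Squarefree n) (hmn : m ∣ n)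
    (hp7 : ∀ p : ℕ, p.Prime → p ∣ m → 7 ≤ p) (hm : ¬ m.Prime) :
    DavW n (jacobiWeights n m) = n.primeFactorsList.length + 1 := by
  rw [← card_primeFactors_eq_length hsf]
  exact DavW_eq_add_one (hasWZSSub_jacobiWeights hodd hsf hmn hp7 hm (Nat.lt_succ_self _))
    fun k hk => exists_not_hasWZSSub hsf (fun a ha => ha.1) hk

theorem davenport_L (n p' : ℕ) (hodd : Odd n) (hsf : Squarefree n)
    (hp7 : ∀ p : ℕ, p.Prime → p ∣ n → 7 ≤ p)
    (hOmega : (Nat.primeFactorsList n).length ≠ 2)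
    (hp' : p'.Prime) (hp'n : p' ∣ n) :
    DavW n (LSet n p') = (Nat.primeFactorsList n).length + 1 := by
  rw [LSet_eq_jacobiWeights hsf.ne_zero hp'n]
  exact davenport_L_general n (n / p') hodd hsf (Nat.div_dvd_of_dvd hp'n)
    (fun p hp h => hp7 p hp (h.trans (Nat.div_dvd_of_dvd hp'n)))
    (mt (length_primeFactorsList_eq_two hp' hp'n) hOmega)
end

section
/- Let n = p'·q, where p' and q are distinct primes, both at least 7, and let A = L(n;p'). Then D_A(n) = 4. -/
open scoped BigOperators

/-!
By the Chinese remainder theorem, `L(p * q; p)` is the product of the nonzero elements of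
`𝔽_p` and the nonzero squares of `𝔽_q`. For the first kind of weights a sequence is
zero-sum as soon as its number of nonzero terms is not one.

Over a finite field, every three terms contain a zero-sum subsequence weighted by nonzero squares,
because ternary quadratic forms are isotropic. Given four terms of `𝔽_p × 𝔽_q`, suppose that every
zero-sum subsequence of the `𝔽_q`-parts has exactly one term with nonzero `𝔽_p`-part. Then no two
of them are disjoint, since their union would have two such terms. Choosing triples suitably, this
leaves the case of exactly two nonzero `𝔽_p`-parts. The two terms carrying them are not zero-sum,
nor are the other two. As the quadratic character decides which pairs are zero-sum, the two halves
of every partition into two pairs then behave alike; hence no pair is zero-sum, and some triple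
with two nonzero `𝔽_p`-parts is.

Conversely, `(1, 0), (0, 1), (0, -r)` with `r` a nonsquare has no zero-sum subsequence.
-/

open Finset

section WZSOn

variable {ι κ R S : Type*} [NonUnitalNonAssocSemiring R] [NonUnitalNonAssocSemiring S]

/-- The subsequence of `x` indexed by the finite set `I` is an `A`-weighted zero-sum sequence.
This is the condition on `I` in `HasWZSSub`, over an arbitrary semiring and index type; the empty
subsequence is allowed. -/
def WZSOn (A : Set R) (x : ι → R) (I : Finset ι) : Prop :=
  ∃ a : ι → R, (∀ i ∈ I, a i ∈ A) ∧ ∑ i ∈ I, a i * x i = 0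

theorem hasWZSSub_iff {n l : ℕ} {A : Set (ZMod n)} {x : Fin l → ZMod n} :
    HasWZSSub A x ↔ ∃ I : Finset (Fin l), I.Nonempty ∧ WZSOn A x I :=
  Iff.rfl

theorem WZSOn.union [DecidableEq ι] {A : Set R} {x : ι → R} {I J : Finset ι}
    (hI : WZSOn A x I) (hJ : WZSOn A x J) (hIJ : Disjoint I J) : WZSOn A x (I ∪ J) := by
  obtain ⟨a, ha, ha0⟩ := hI
  obtain ⟨b, hb, hb0⟩ := hJ
  have notMem_of_mem : ∀ i ∈ J, i ∉ I := fun i hiJ hiI => disjoint_left.1 hIJ hiI hiJ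
  refine ⟨fun i => if i ∈ I then a i else b i, fun i hi => ?_, ?_⟩
  · by_cases hiI : i ∈ I
    · simpa [hiI] using ha i hiI
    · simpa [hiI] using hb i ((mem_union.1 hi).resolve_left hiI)
  · have sum_I : ∑ i ∈ I, (if i ∈ I then a i else b i) * x i = 0 :=
      (sum_congr rfl fun i hi => by rw [if_pos hi]).trans ha0
    have sum_J : ∑ i ∈ J, (if i ∈ I then a i else b i) * x i = 0 :=
      (sum_congr rfl fun i hi => by rw [if_neg (notMem_of_mem i hi)]).trans hb0
    rw [sum_union hIJ, sum_I, sum_J, add_zero]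

theorem WZSOn.exists_card_inter_ne_one [DecidableEq ι] {A : Set R} {x : ι → R}
    {I J : Finset ι} (hIx : WZSOn A x I) (hJx : WZSOn A x J) (hI : I.Nonempty)
    (hJ : J.Nonempty) (hIJ : Disjoint I J) (X : Finset ι) :
    ∃ I : Finset ι, I.Nonempty ∧ #(I ∩ X) ≠ 1 ∧ WZSOn A x I := by
  by_cases hIX : #(I ∩ X) = 1
  · by_cases hJX : #(J ∩ X) = 1
    · refine ⟨I ∪ J, hI.mono subset_union_left, ?_, hIx.union hJx hIJ⟩
      rw [union_inter_distrib_right, card_union_of_disjoint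
        (hIJ.mono inter_subset_left inter_subset_left), hIX, hJX]
      decide
    · exact ⟨J, hJ, hJX, hJx⟩
  · exact ⟨I, hI, hIX, hIx⟩

theorem wzsOn_map_iff {A : Set R} {x : ι → R} (f : κ ↪ ι) {I : Finset κ} :
    WZSOn A x (I.map f) ↔ WZSOn A (x ∘ f) I := by
  constructor
  · rintro ⟨a, ha, ha0⟩
    exact ⟨a ∘ f, fun i hi => ha _ (mem_map_of_mem f hi), by simpa using ha0⟩
  · rintro ⟨a, ha, ha0⟩
    refine ⟨Function.extend f a 0, ?_, ?_⟩
    · simpa [f.injective.extend_apply] using ha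
    · simpa [f.injective.extend_apply] using ha0

theorem wzsOn_preimage_iff (e : R ≃+* S) {A : Set S} {x : ι → R} {I : Finset ι} :
    WZSOn (e ⁻¹' A) x I ↔ WZSOn A (e ∘ x) I := by
  constructor
  · rintro ⟨a, ha, ha0⟩
    exact ⟨e ∘ a, ha, by simpa using congrArg e ha0⟩
  · rintro ⟨a, ha, ha0⟩
    exact ⟨e.symm ∘ a, by simpa using ha, e.injective (by simpa using ha0)⟩

theorem wzsOn_prod_iff {A : Set R} {B : Set S} {z : ι → R × S} {I : Finset ι} :
    WZSOn (A ×ˢ B) z I ↔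
      WZSOn A (fun i => (z i).1) I ∧ WZSOn B (fun i => (z i).2) I := by
  constructor
  · rintro ⟨a, ha, ha0⟩
    refine ⟨⟨fun i => (a i).1, fun i hi => (ha i hi).1, ?_⟩,
      ⟨fun i => (a i).2, fun i hi => (ha i hi).2, ?_⟩⟩
    · simpa [Prod.fst_sum] using congrArg Prod.fst ha0
    · simpa [Prod.snd_sum] using congrArg Prod.snd ha0
  · rintro ⟨⟨a, ha, ha0⟩, ⟨b, hb, hb0⟩⟩
    refine ⟨fun i => (a i, b i), fun i hi => ⟨ha i hi, hb i hi⟩, Prod.ext ?_ ?_⟩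
    · simpa [Prod.fst_sum] using ha0
    · simpa [Prod.snd_sum] using hb0

end WZSOn

theorem HasWZSSub.of_castLE {n k l : ℕ} {A : Set (ZMod n)} {x : Fin l → ZMod n} (hkl : k ≤ l)
    (h : HasWZSSub A (x ∘ Fin.castLE hkl)) : HasWZSSub A x := by
  obtain ⟨I, hI, hIx⟩ := h
  exact ⟨I.map (Fin.castLEEmb hkl), hI.map, (wzsOn_map_iff _).2 hIx⟩

theorem davW_eq_succ {n k : ℕ} {A : Set (ZMod n)}
    (upper : ∀ x : Fin (k + 1) → ZMod n, HasWZSSub A x)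
    (lower : ∃ x : Fin k → ZMod n, ¬ HasWZSSub A x) : DavW n A = k + 1 := by
  obtain ⟨x, hx⟩ := lower
  refine IsLeast.csInf_eq ⟨⟨k.succ_pos, upper⟩, fun l ⟨_, hl⟩ => ?_⟩
  by_contra hlt
  exact hx (.of_castLE (by lia) (hl _))

section NonzeroWeights

variable {ι F : Type*} [DivisionRing F]

theorem exists_ne_zero_add_eq {c : F} (hc0 : c ≠ 0) (hc1 : c ≠ 1) (t : F) :
    ∃ u v : F, u ≠ 0 ∧ v ≠ 0 ∧ u + v = t := by
  by_cases ht : t = 0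
  · exact ⟨1, -1, one_ne_zero, neg_ne_zero.2 one_ne_zero, by rw [ht, add_neg_cancel]⟩
  · exact ⟨c * t, (1 - c) * t, mul_ne_zero hc0 ht, mul_ne_zero (sub_ne_zero.2 hc1.symm) ht, by
      rw [sub_mul, one_mul, add_sub_cancel]⟩

theorem exists_forall_ne_zero_sum_eq_zero {c : F} (hc0 : c ≠ 0) (hc1 : c ≠ 1) {I : Finset ι}
    (hI : #I ≠ 1) : ∃ b : ι → F, (∀ i, b i ≠ 0) ∧ ∑ i ∈ I, b i = 0 := by
  classical
  obtain rfl | ⟨i, hi⟩ := I.eq_empty_or_nonempty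
  · exact ⟨1, fun _ => one_ne_zero, sum_empty⟩
  obtain ⟨j, hj, hji⟩ : ∃ j ∈ I, j ≠ i :=
    exists_mem_ne (by have := card_pos.2 ⟨i, hi⟩; lia) i
  obtain ⟨u, v, hu, hv, huv⟩ :=
    exists_ne_zero_add_eq hc0 hc1 (-∑ _k ∈ (I.erase i).erase j, (1 : F))
  refine ⟨fun k => if k = i then u else if k = j then v else 1, fun k => ?_, ?_⟩
  · dsimp only
    split_ifs
    exacts [hu, hv, one_ne_zero]
  · have sum_rest : ∑ k ∈ (I.erase i).erase j, (if k = i then u else if k = j then v else 1) =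
        ∑ _k ∈ (I.erase i).erase j, (1 : F) :=
      sum_congr rfl fun k hk => by simp_all
    rw [← add_sum_erase I _ hi, ← add_sum_erase _ _ (mem_erase.2 ⟨hji, hj⟩), sum_rest,
      if_pos rfl, if_neg hji, if_pos rfl, ← add_assoc, huv, neg_add_cancel]

theorem wzsOn_compl_zero [DecidableEq F] {c : F} (hc0 : c ≠ 0) (hc1 : c ≠ 1) {x : ι → F}
    {I : Finset ι} (hI : #{i ∈ I | x i ≠ 0} ≠ 1) : WZSOn {0}ᶜ x I := by
  obtain ⟨b, hb, hb0⟩ := exists_forall_ne_zero_sum_eq_zero hc0 hc1 hI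
  refine ⟨fun i => if x i = 0 then 1 else b i / x i, fun i _ => ?_, ?_⟩
  · by_cases hxi : x i = 0
    · simp [hxi]
    · simp [hxi, hb i]
  · rw [sum_filter] at hb0
    refine (sum_congr rfl fun i _ => ?_).trans hb0
    by_cases hxi : x i = 0
    · simp [hxi]
    · simp [hxi]

end NonzeroWeights

/-- The nonzero squares of `K`, as a weight set. -/
def nonzeroSquares (K : Type*) [MulZeroClass K] : Set K := {a | a ≠ 0 ∧ IsSquare a}

section SquareWeights

variable {ι K : Type*} [Field K] {y : ι → K}

theorem wzsOn_nonzeroSquares_singleton_iff {i : ι} :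
    WZSOn (nonzeroSquares K) y {i} ↔ y i = 0 := by
  constructor
  · rintro ⟨a, ha, ha0⟩
    rw [sum_singleton] at ha0
    exact (mul_eq_zero.1 ha0).resolve_left (ha i (mem_singleton_self i)).1
  · intro hyi
    exact ⟨1, fun _ _ => ⟨one_ne_zero, IsSquare.one⟩, by simp [hyi]⟩

theorem wzsOn_nonzeroSquares_pair_iff [DecidableEq ι] {i j : ι} (hij : i ≠ j) (hi : y i ≠ 0)
    (hj : y j ≠ 0) : WZSOn (nonzeroSquares K) y {i, j} ↔ IsSquare (-(y i * y j)) := by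
  constructor
  · rintro ⟨a, ha, ha0⟩
    rw [sum_pair hij] at ha0
    obtain ⟨hai, hai_sq⟩ := ha i (by simp)
    obtain ⟨-, haj_sq⟩ := ha j (by simp)
    have neg_mul_eq : -(y i * y j) = a j / a i * (y j * y j) := by
      field_simp
      linear_combination -ha0
    exact neg_mul_eq ▸ (haj_sq.div hai_sq).mul (IsSquare.mul_self _)
  · intro hsq
    refine ⟨fun k => if k = i then 1 else -(y i * y j) / (y j * y j), fun k _ => ?_, ?_⟩
    · by_cases hki : k = i
      · simp [nonzeroSquares, hki]
      · simpa [nonzeroSquares, hki, hi, hj] using hsq.div (IsSquare.mul_self (y j))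
    · simp only [sum_pair hij, if_true, if_neg hij.symm]
      field_simp
      ring

theorem exists_sum_sq_mul_eq_zero [Finite K] {s : Finset ι} (hs : 2 < #s) (y : ι → K) :
    ∃ c : ι → K, (∃ i ∈ s, c i ≠ 0) ∧ ∑ i ∈ s, c i ^ 2 * y i = 0 := by
  classical
  have := Fintype.ofFinite K
  let f : MvPolynomial s K := ∑ i : s, MvPolynomial.X i ^ 2 * MvPolynomial.C (y i)
  have eval_f (c : s → K) : MvPolynomial.eval c f = ∑ i : s, c i ^ 2 * y i := by simp [f]
  have totalDegree_f : f.totalDegree ≤ 2 := MvPolynomial.totalDegree_finsetSum_le fun i _ =>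
    (MvPolynomial.totalDegree_mul _ _).trans (by simp)
  have char_dvd_card := char_dvd_card_solutions (ringChar K) (f := f)
    (totalDegree_f.trans_lt (by simpa using hs))
  let zeroSol : {c : s → K // MvPolynomial.eval c f = 0} := ⟨0, (eval_f 0).trans (by simp)⟩
  have one_lt_card : 1 < Fintype.card {c : s → K // MvPolynomial.eval c f = 0} :=
    (CharP.char_is_prime K (ringChar K)).one_lt.trans_le
      (Nat.le_of_dvd (Fintype.card_pos_iff.2 ⟨zeroSol⟩) char_dvd_card)
  obtain ⟨⟨c, hc⟩, hc0⟩ := Fintype.exists_ne_of_one_lt_card one_lt_card zeroSol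
  obtain ⟨i, hi : c i ≠ 0⟩ := Function.ne_iff.1 (Subtype.coe_ne_coe.2 hc0)
  refine ⟨fun j => if hj : j ∈ s then c ⟨j, hj⟩ else 0, ⟨i, i.2, by simpa using hi⟩, ?_⟩
  rw [← sum_coe_sort]
  simpa [eval_f] using hc

theorem exists_wzsOn_nonzeroSquares_subset [Finite K] {s : Finset ι} (hs : 2 < #s) (y : ι → K) :
    ∃ J ⊆ s, J.Nonempty ∧ WZSOn (nonzeroSquares K) y J := by
  classical
  obtain ⟨c, ⟨i, his, hci⟩, hc0⟩ := exists_sum_sq_mul_eq_zero hs y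
  refine ⟨{j ∈ s | c j ≠ 0}, filter_subset _ _, ⟨i, mem_filter.2 ⟨his, hci⟩⟩,
    fun j => c j ^ 2, fun j hj => ⟨pow_ne_zero 2 (mem_filter.1 hj).2, IsSquare.sq _⟩, ?_⟩
  exact (sum_filter_of_ne fun j _ hj =>
    ne_zero_pow two_ne_zero (left_ne_zero_of_mul hj)).trans hc0

theorem wzsOn_nonzeroSquares_of_card_eq_three [Finite K] {s : Finset ι} (hs : #s = 3)
    (hy : ∀ i ∈ s, y i ≠ 0)
    (hpair : ∀ i ∈ s, ∀ j ∈ s, i ≠ j → ¬ IsSquare (-(y i * y j))) :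
    WZSOn (nonzeroSquares K) y s := by
  classical
  obtain ⟨J, hJs, hJ, hJy⟩ := exists_wzsOn_nonzeroSquares_subset (by lia : 2 < #s) y
  have card_ne_one : #J ≠ 1 := fun h => by
    obtain ⟨i, rfl⟩ := card_eq_one.1 h
    exact hy i (hJs (mem_singleton_self i)) (wzsOn_nonzeroSquares_singleton_iff.1 hJy)
  have card_ne_two : #J ≠ 2 := fun h => by
    obtain ⟨i, j, hij, rfl⟩ := card_eq_two.1 h
    have his : i ∈ s := hJs (by simp)
    have hjs : j ∈ s := hJs (by simp)
    exact hpair i his j hjs hij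
      ((wzsOn_nonzeroSquares_pair_iff hij (hy i his) (hy j hjs)).1 hJy)
  have card_le : #s ≤ #J := by
    have := hJ.card_pos
    lia
  rwa [← eq_of_subset_of_card_le hJs card_le]

theorem isSquare_mul_of_not_isSquare [Finite K] {a b : K} (ha : ¬ IsSquare a)
    (hb : ¬ IsSquare b) : IsSquare (a * b) := by
  classical
  have := Fintype.ofFinite K
  by_contra hab
  rw [← quadraticChar_neg_one_iff_not_isSquare] at ha hb hab
  rw [map_mul, ha, hb] at hab
  norm_num at hab

theorem isSquare_neg_mul_of_not_isSquare_neg_mul [Finite K] {a b c d : K} (ha : a ≠ 0) (hc : c ≠ 0)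
    (hab : ¬ IsSquare (-(a * b))) (hcd : ¬ IsSquare (-(c * d))) (hac : IsSquare (-(a * c))) :
    IsSquare (-(b * d)) := by
  have neg_mul_eq : -(b * d) = -(a * b) * -(c * d) / -(a * c) := by
    field_simp
  exact neg_mul_eq ▸ (isSquare_mul_of_not_isSquare hab hcd).div hac

section FourTerms

variable [DecidableEq ι] [Finite K]

theorem exists_wzsOn_card_inter_ne_one_of_isSquare (hy : ∀ i, y i ≠ 0) {i j k l : ι}
    (hik : i ≠ k) (hjl : j ≠ l) (hdisj : Disjoint ({i, k} : Finset ι) {j, l})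
    (hij_sq : ¬ IsSquare (-(y i * y j))) (hkl_sq : ¬ IsSquare (-(y k * y l)))
    (hik_sq : IsSquare (-(y i * y k))) (X : Finset ι) :
    ∃ I : Finset ι, I.Nonempty ∧ #(I ∩ X) ≠ 1 ∧ WZSOn (nonzeroSquares K) y I := by
  have hjl_sq : IsSquare (-(y j * y l)) :=
    isSquare_neg_mul_of_not_isSquare_neg_mul (hy i) (hy k) hij_sq hkl_sq hik_sq
  have wzsOn_ik := (wzsOn_nonzeroSquares_pair_iff hik (hy i) (hy k)).2 hik_sq
  have wzsOn_jl := (wzsOn_nonzeroSquares_pair_iff hjl (hy j) (hy l)).2 hjl_sq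
  exact wzsOn_ik.exists_card_inter_ne_one wzsOn_jl (insert_nonempty _ _) (insert_nonempty _ _)
    hdisj X

variable [Fintype ι] {X : Finset ι}

theorem exists_wzsOn_card_inter_ne_one_of_eq_zero (hι : 4 ≤ Fintype.card ι) {i : ι} (hi : y i = 0)
    (X : Finset ι) :
    ∃ I : Finset ι, I.Nonempty ∧ #(I ∩ X) ≠ 1 ∧ WZSOn (nonzeroSquares K) y I := by
  have card_compl_gt : 2 < #({i}ᶜ : Finset ι) := by
    rw [card_compl, card_singleton]
    lia
  obtain ⟨J, hJi, hJ, hJy⟩ := exists_wzsOn_nonzeroSquares_subset card_compl_gt y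
  exact (wzsOn_nonzeroSquares_singleton_iff.2 hi).exists_card_inter_ne_one hJy
    (singleton_nonempty i) hJ (disjoint_compl_right.mono_right hJi) X

theorem exists_wzsOn_card_inter_ne_one_of_card_ne_two (hι : 4 ≤ Fintype.card ι) (hX : #X ≠ 2)
    (y : ι → K) :
    ∃ I : Finset ι, I.Nonempty ∧ #(I ∩ X) ≠ 1 ∧ WZSOn (nonzeroSquares K) y I := by
  rcases hX.lt_or_gt with hX_lt | hX_gt
  · have card_compl_gt : 2 < #Xᶜ := by
      rw [card_compl]
      lia
    obtain ⟨J, hJX, hJ, hJy⟩ := exists_wzsOn_nonzeroSquares_subset card_compl_gt y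
    have inter_eq_empty : J ∩ X = ∅ :=
      disjoint_iff_inter_eq_empty.1 (disjoint_compl_left.mono_left hJX)
    exact ⟨J, hJ, by simp [inter_eq_empty], hJy⟩
  · obtain ⟨J, hJX, hJ, hJy⟩ := exists_wzsOn_nonzeroSquares_subset hX_gt y
    by_cases hJ_card : #J = 1
    · obtain ⟨i, rfl⟩ := card_eq_one.1 hJ_card
      exact exists_wzsOn_card_inter_ne_one_of_eq_zero hι
        (wzsOn_nonzeroSquares_singleton_iff.1 hJy) X
    · exact ⟨J, hJ, by rwa [inter_eq_left.2 hJX], hJy⟩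

theorem exists_wzsOn_card_inter_ne_one_of_card_eq_two (hι : 4 ≤ Fintype.card ι) (hX : #X = 2)
    (y : ι → K) :
    ∃ I : Finset ι, I.Nonempty ∧ #(I ∩ X) ≠ 1 ∧ WZSOn (nonzeroSquares K) y I := by
  by_contra hbad
  have hy (i : ι) : y i ≠ 0 := fun hi => hbad (exists_wzsOn_card_inter_ne_one_of_eq_zero hι hi X)
  obtain ⟨i, j, hij, rfl⟩ := card_eq_two.1 hX
  obtain ⟨k, hk, l, hl, hkl⟩ : ∃ k ∈ ({i, j}ᶜ : Finset ι), ∃ l ∈ ({i, j}ᶜ : Finset ι), k ≠ l := by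
    rw [← one_lt_card, card_compl, hX]
    lia
  obtain ⟨hki, hkj⟩ : k ≠ i ∧ k ≠ j := by simpa using hk
  obtain ⟨hli, hlj⟩ : l ≠ i ∧ l ≠ j := by simpa using hl
  have not_sq_ij : ¬ IsSquare (-(y i * y j)) := fun h => hbad
    ⟨{i, j}, insert_nonempty _ _, by simp [hij],
      (wzsOn_nonzeroSquares_pair_iff hij (hy i) (hy j)).2 h⟩
  have not_sq_kl : ¬ IsSquare (-(y k * y l)) := fun h => hbad
    ⟨{k, l}, insert_nonempty _ _, by simp [hki, hkj, hli, hlj],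
      (wzsOn_nonzeroSquares_pair_iff hkl (hy k) (hy l)).2 h⟩
  have not_sq_ik : ¬ IsSquare (-(y i * y k)) := fun h =>
    hbad (exists_wzsOn_card_inter_ne_one_of_isSquare hy hki.symm hlj.symm
      (by simp [*, Ne.symm]) not_sq_ij not_sq_kl h _)
  have not_sq_jk : ¬ IsSquare (-(y j * y k)) := fun h =>
    hbad (exists_wzsOn_card_inter_ne_one_of_isSquare hy hkj.symm hli.symm
      (by simp [*, Ne.symm]) (mul_comm (y i) (y j) ▸ not_sq_ij) not_sq_kl h _)
  have wzsOn_ijk : WZSOn (nonzeroSquares K) y {i, j, k} :=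
    wzsOn_nonzeroSquares_of_card_eq_three (by simp [*, Ne.symm]) (fun a _ => hy a)
      (by simp [*, mul_comm, Ne.symm])
  refine hbad ⟨{i, j, k}, insert_nonempty _ _, ?_, wzsOn_ijk⟩
  simp [*]

theorem exists_wzsOn_card_inter_ne_one (hι : 4 ≤ Fintype.card ι) (X : Finset ι) (y : ι → K) :
    ∃ I : Finset ι, I.Nonempty ∧ #(I ∩ X) ≠ 1 ∧ WZSOn (nonzeroSquares K) y I := by
  by_cases hX : #X = 2
  · exact exists_wzsOn_card_inter_ne_one_of_card_eq_two hι hX y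
  · exact exists_wzsOn_card_inter_ne_one_of_card_ne_two hι hX y

end FourTerms

end SquareWeights

section Product

variable {F K : Type*} [DivisionRing F] [Field K]

theorem exists_wzsOn_compl_zero_prod_nonzeroSquares {ι : Type*} [Fintype ι] [Finite K]
    (hι : 4 ≤ Fintype.card ι) {c : F} (hc0 : c ≠ 0) (hc1 : c ≠ 1) (z : ι → F × K) :
    ∃ I : Finset ι, I.Nonempty ∧ WZSOn ({0}ᶜ ×ˢ nonzeroSquares K) z I := by
  classical
  obtain ⟨I, hI, hIX, hIy⟩ :=
    exists_wzsOn_card_inter_ne_one hι {i | (z i).1 ≠ 0} fun i => (z i).2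
  rw [inter_filter, inter_univ] at hIX
  exact ⟨I, hI, wzsOn_prod_iff.2 ⟨wzsOn_compl_zero hc0 hc1 hIX, hIy⟩⟩

theorem not_wzsOn_compl_zero_prod_nonzeroSquares {r : K} (hr : ¬ IsSquare r)
    {I : Finset (Fin 3)} (hI : I.Nonempty) :
    ¬ WZSOn ({0}ᶜ ×ˢ nonzeroSquares K) ![((1 : F), (0 : K)), (0, 1), (0, -r)] I := by
  intro hz
  obtain ⟨⟨a, ha, ha0⟩, hy⟩ := wzsOn_prod_iff.1 hz
  have zero_notMem : 0 ∉ I := fun h0 => by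
    have sum_eq := sum_eq_single_of_mem 0 h0
      (f := fun i => a i * (![((1 : F), (0 : K)), (0, 1), (0, -r)] i).1)
      fun i _ hi => by fin_cases i <;> simp_all
    exact ha 0 h0 (by simpa using sum_eq.symm.trans ha0)
  have hI_cases : ∀ I : Finset (Fin 3), I.Nonempty → 0 ∉ I → I = {1} ∨ I = {2} ∨ I = {1, 2} := by
    decide
  have hr0 : r ≠ 0 := fun h => hr (h ▸ IsSquare.zero)
  rcases hI_cases I hI zero_notMem with rfl | rfl | rfl
  · simpa using wzsOn_nonzeroSquares_singleton_iff.1 hy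
  · simpa [hr0] using wzsOn_nonzeroSquares_singleton_iff.1 hy
  · refine hr ?_
    simpa using (wzsOn_nonzeroSquares_pair_iff (by decide) (by simp) (by simpa using hr0)).1 hy

end Product

section LSet

variable {p q : ℕ} [Fact p.Prime] [Fact q.Prime]

theorem LSet_mul_eq_preimage (hpq : p.Coprime q) :
    LSet (p * q) p = ZMod.chineseRemainder hpq ⁻¹' ({0}ᶜ ×ˢ nonzeroSquares (ZMod q)) := by
  ext a
  have := NeZero.mk (mul_ne_zero (Fact.out : p.Prime).ne_zero (Fact.out : q.Prime).ne_zero)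
  have unit_iff : IsUnit a ↔ (ZMod.chineseRemainder hpq a).1 ≠ 0 ∧
      (ZMod.chineseRemainder hpq a).2 ≠ 0 := by
    rw [← MulEquiv.isUnit_map (ZMod.chineseRemainder hpq), Prod.isUnit_iff,
      isUnit_iff_ne_zero, isUnit_iff_ne_zero]
  have apply_eq : ZMod.chineseRemainder hpq a = ((a.val : ZMod p), (a.val : ZMod q)) := by
    conv_lhs => rw [← ZMod.natCast_zmod_val a]
    rw [map_natCast]
    rfl
  simp only [LSet, Set.mem_ofPred_eq, Set.mem_preimage, Set.mem_prod, Set.mem_compl_singleton_iff,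
    nonzeroSquares]
  rw [unit_iff, and_assoc]
  refine and_congr_right fun hap => and_congr_right fun haq => ?_
  rw [apply_eq] at hap haq ⊢
  have legendre_p_ne_zero : legendreSym p a.val ≠ 0 := by
    rw [Ne, legendreSym.eq_zero_iff]
    exact_mod_cast hap
  -- `(a / pq) = (a / p) (a / q)`, so the condition amounts to `(a / q) = 1`.
  rw [jacobiSym.mul_right, ← jacobiSym.legendreSym.to_jacobiSym,
    ← jacobiSym.legendreSym.to_jacobiSym, mul_eq_left₀ legendre_p_ne_zero,
    legendreSym.eq_one_iff _ (by exact_mod_cast haq), Int.cast_natCast]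

theorem hasWZSSub_LSet_iff (hpq : p.Coprime q) {l : ℕ} {x : Fin l → ZMod (p * q)} :
    HasWZSSub (LSet (p * q) p) x ↔ ∃ I : Finset (Fin l), I.Nonempty ∧
      WZSOn ({0}ᶜ ×ˢ nonzeroSquares (ZMod q)) (ZMod.chineseRemainder hpq ∘ x) I := by
  simp only [hasWZSSub_iff, LSet_mul_eq_preimage hpq, wzsOn_preimage_iff]

end LSet

theorem davenport_L_pq_general (n p' q : ℕ) (hp' : p'.Prime) (hq : q.Prime) (hne : p' ≠ q)
    (hp2 : p' ≠ 2) (hq2 : q ≠ 2) (hn : n = p' * q) :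
    DavW n (LSet n p') = 4 := by
  subst hn
  have := Fact.mk hp'
  have := Fact.mk hq
  have := Fact.mk (hp'.two_le.lt_of_ne' hp2)
  have hpq : p'.Coprime q := (Nat.coprime_primes hp' hq).2 hne
  refine davW_eq_succ (fun x => ?_) ?_
  · exact (hasWZSSub_LSet_iff hpq).2 (exists_wzsOn_compl_zero_prod_nonzeroSquares
      (Fintype.card_fin 4).ge (neg_ne_zero.2 one_ne_zero) ZMod.neg_one_ne_one _)
  · obtain ⟨r, hr⟩ := FiniteField.exists_nonsquare (F := ZMod q) (by rwa [ZMod.ringChar_zmod_n])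
    obtain ⟨x, hx : ZMod.chineseRemainder hpq ∘ x = _⟩ :=
      (ZMod.chineseRemainder hpq).surjective.comp_left ![(1, 0), (0, 1), (0, -r)]
    refine ⟨x, fun h => ?_⟩
    obtain ⟨I, hI, hIz⟩ := (hasWZSSub_LSet_iff hpq).1 h
    exact not_wzsOn_compl_zero_prod_nonzeroSquares hr hI (hx ▸ hIz)

theorem davenport_L_pq (n p' q : ℕ) (hp' : p'.Prime) (hq : q.Prime) (hne : p' ≠ q)
    (hp7 : 7 ≤ p') (hq7 : 7 ≤ q) (hn : n = p' * q) :
    DavW n (LSet n p') = 4 :=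
  davenport_L_pq_general n p' q hp' hq hne (by lia) (by lia) hn
end

section
/- Let n be odd, let A = S(n), and let p' be a prime divisor of n with v_{p'}(n) ≥ 2. Let n' = n/p' and let f : U(n) → U(n') be the natural map. Then L(n';p') ⊆ f(A). -/
open scoped BigOperators

/-!
The symbols `(a / (n / d))` and `(a / d)` depend only on the residue of `a` modulo `n / d`, because
`d ∣ n / d`, and their product `(a / n)` is `1` exactly when they agree. Hence `S(n)` is the full
preimage of `L(n / d; d)` under the reduction map, which is surjective on units.
-/

theorem jacobiSym_val_cast {k m n : ℕ} [NeZero n] (hkm : k ∣ m) (a : ZMod n) :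
    jacobiSym (a.cast : ZMod m).val k = jacobiSym a.val k := by
  apply jacobiSym.mod_left'
  rw [ZMod.cast_eq_val, ZMod.val_natCast]
  exact_mod_cast Nat.mod_mod_of_dvd a.val hkm

theorem jacobiSym_mul_right_eq_one_iff {a : ℤ} {m k : ℕ} [NeZero m] [NeZero k]
    (hak : a.gcd k = 1) :
    jacobiSym a (m * k) = 1 ↔ jacobiSym a m = jacobiSym a k := by
  rw [jacobiSym.mul_right, ← jacobiSym.sq_one hak, sq]
  exact mul_left_inj' (jacobiSym.ne_zero hak)

theorem jacobiSym_val_eq_one_iff_unitsMap {n d : ℕ} [NeZero n] (hdn : d ∣ n) (hd : d ∣ n / d)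
    (a : (ZMod n)ˣ) :
    jacobiSym (a : ZMod n).val n = 1 ↔
      jacobiSym (ZMod.unitsMap (Nat.div_dvd_of_dvd hdn) a : ZMod (n / d)).val (n / d) =
        jacobiSym (ZMod.unitsMap (Nat.div_dvd_of_dvd hdn) a : ZMod (n / d)).val d := by
  have : NeZero d := ⟨ne_zero_of_dvd_ne_zero (NeZero.ne n) hdn⟩
  have : NeZero (n / d) := ⟨ne_zero_of_dvd_ne_zero (NeZero.ne n) (Nat.div_dvd_of_dvd hdn)⟩
  have coprime : ((a : ZMod n).val : ℤ).gcd d = 1 :=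
    (ZMod.val_coe_unit_coprime a).coprime_dvd_right hdn
  rw [ZMod.unitsMap_val, jacobiSym_val_cast dvd_rfl, jacobiSym_val_cast hd,
    ← jacobiSym_mul_right_eq_one_iff coprime, Nat.div_mul_cancel hdn]

theorem lunits_subset_image_S_general {n d : ℕ} (hodd : Odd n) (hdn : d ∣ n) (hd : d ∣ n / d) :
    ZMod.unitsMap (Nat.div_dvd_of_dvd hdn) ''
        {a : (ZMod n)ˣ | jacobiSym (a : ZMod n).val n = 1} =
      {b : (ZMod (n / d))ˣ |
        jacobiSym (b : ZMod (n / d)).val (n / d) = jacobiSym (b : ZMod (n / d)).val d} := by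
  have : NeZero n := ⟨hodd.pos.ne'⟩
  refine (congrArg _ ?_).trans
    (Set.image_preimage_eq _ (ZMod.unitsMap_surjective (Nat.div_dvd_of_dvd hdn)))
  exact Set.ext (jacobiSym_val_eq_one_iff_unitsMap hdn hd)

theorem lunits_subset_image_S (n p' : ℕ) (hodd : Odd n) (hp' : p'.Prime)
    (hp'n : p' ∣ n) (hv : 2 ≤ n.factorization p') :
    {b : (ZMod (n / p'))ˣ |
        jacobiSym (((b : ZMod (n / p')).val : ℕ) : ℤ) (n / p')
          = jacobiSym (((b : ZMod (n / p')).val : ℕ) : ℤ) p'}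
      ⊆ (ZMod.unitsMap (Nat.div_dvd_of_dvd hp'n)) ''
          {a : (ZMod n)ˣ | jacobiSym (((a : ZMod n).val : ℕ) : ℤ) n = 1} := by
  have hd : p' ∣ n / p' := by
    rw [Nat.dvd_div_iff_mul_dvd hp'n, ← sq]
    exact (hp'.pow_dvd_iff_le_factorization hodd.pos.ne').2 hv
  exact (lunits_subset_image_S_general hodd hp'n hd).superset
end

section
/- Let n be odd and suppose n has a unique prime divisor p' with v_{p'}(n) = 2 while v_q(n) = 1 for every other prime divisor q of n. Let A = S(n). Let S = (x_1,…,x_l) be a sequence in Z_n such that for every prime divisor p of n at least two terms of S are coprime to p. Let n' = n/p'² and let S' be the image of S under the natural map Z_n → Z_{n'}. If at most one term of S' is a unit of Z_{n'}, then S is an A-weighted zero-sum sequence. -/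
open scoped BigOperators

/-!
Over a semilocal ring in which `2` is invertible, a vector of unit weights annihilating `x` exists
as soon as every maximal ideal misses at least two terms of `x`: modulo one maximal ideal the
weights can be written down explicitly, and the Chinese remainder theorem glues them inside the
module of relations of `x`. Hence `∑ bᵢ xᵢ = 0` for some units `bᵢ` of `ZMod n`.

It remains to turn all Jacobi symbols of the weights into `1`. If a prime `q ∥ n` divides `xᵢ`, then
`bᵢ` may be multiplied by a `u ≡ 1` modulo `n / q` with `(u/n) = -1`, as `u * xᵢ = xᵢ`. At most one
term `xⱼ` admits no such `q`; multiplying all the weights by `bⱼ` gives this term the weight `bⱼ²`,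
whose Jacobi symbol is `1`.
-/

section UnitWeights

variable {ι R : Type*} [CommRing R]

lemma exists_mem_forall_isUnit [Finite (MaximalSpectrum R)] {K : Submodule R (ι → R)}
    (hK : ∀ M : MaximalSpectrum R, ∃ a ∈ K, ∀ t, a t ∉ M.asIdeal) :
    ∃ a ∈ K, ∀ t, IsUnit (a t) := by
  classical
  have := Fintype.ofFinite (MaximalSpectrum R)
  choose a haK ha using hK
  have hcoprime : Pairwise (Function.onFun IsCoprime (MaximalSpectrum.asIdeal (R := R))) :=
    fun M N hMN ↦ Ideal.isCoprime_of_isMaximal (MaximalSpectrum.ext_iff.ne.mp hMN)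
  choose e he using fun N : MaximalSpectrum R ↦
    Ideal.exists_forall_sub_mem_ideal hcoprime (Pi.single N 1)
  refine ⟨∑ N, e N • a N, K.sum_mem fun N _ ↦ K.smul_mem _ (haK N), fun t ↦ ?_⟩
  by_contra hunit
  obtain ⟨I, hI, htI⟩ := exists_max_ideal_of_mem_nonunits hunit
  let M : MaximalSpectrum R := ⟨I, hI⟩
  have hsub : ∑ N, e N * a N t - a M t ∈ I := by
    have hsingle : a M t = ∑ N, Pi.single (M := fun _ ↦ R) N 1 M * a N t := by
      simp [Pi.single_apply]
    rw [hsingle, ← Finset.sum_sub_distrib]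
    refine I.sum_mem fun N _ ↦ ?_
    rw [← sub_mul]
    exact I.mul_mem_right _ (he N M)
  refine ha M t ((I.sub_mem_iff_right ?_).mp hsub)
  simpa using htI

lemma exists_isUnit_weights_sum_notMem {P : Ideal R} [P.IsPrime] (h2 : (2 : R) ∉ P)
    {x : ι → R} {s : Finset ι} {i : ι} (his : i ∈ s) (hi : x i ∉ P) :
    ∃ w : ι → R, (∀ t, IsUnit (w t)) ∧ ∑ t ∈ s, w t * x t ∉ P := by
  classical
  by_cases hs : ∑ t ∈ s, x t ∈ P
  · refine ⟨1 - 2 * Pi.single i 1, fun t ↦ ?_, ?_⟩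
    · rcases eq_or_ne t i with rfl | hti
      · norm_num
      · simp [hti]
    · have hsum : ∑ t ∈ s, (1 - 2 * Pi.single i 1 : ι → R) t * x t = ∑ t ∈ s, x t - 2 * x i := by
        simp [sub_mul, Finset.sum_sub_distrib, Pi.single_apply, his]
      rw [hsum, P.sub_mem_iff_right hs]
      exact Ideal.IsPrime.mul_notMem ‹_› h2 hi
  · exact ⟨1, fun _ ↦ isUnit_one, by simpa using hs⟩

variable [Fintype ι]

lemma exists_notMem_weights_sum_eq_zero {P : Ideal R} [hP : P.IsPrime] (h2 : (2 : R) ∉ P)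
    {x : ι → R} (hx : {i | x i ∉ P}.Nontrivial) :
    ∃ a : ι → R, (∀ t, a t ∉ P) ∧ ∑ t, a t * x t = 0 := by
  classical
  obtain ⟨i, hi, j, hj, hij⟩ := hx
  obtain ⟨w, hw, hwx⟩ := exists_isUnit_weights_sum_notMem h2
    (Finset.mem_erase.mpr ⟨hij, Finset.mem_univ i⟩) hi
  set W := ∑ t ∈ Finset.univ.erase j, w t * x t with hW
  refine ⟨Function.update (fun t ↦ x j * w t) j (-W), fun t ↦ ?_, ?_⟩
  · rcases eq_or_ne t j with rfl | htj
    · rwa [Function.update_self, neg_mem_iff]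
    · rw [Function.update_of_ne htj]
      exact hP.mul_notMem hj fun hmem ↦ hP.ne_top (P.eq_top_of_isUnit_mem hmem (hw t))
  · have herase : ∑ t ∈ Finset.univ.erase j,
        Function.update (fun t ↦ x j * w t) j (-W) t * x t = x j * W := by
      rw [hW, Finset.mul_sum]
      refine Finset.sum_congr rfl fun t ht ↦ ?_
      rw [Function.update_of_ne (Finset.ne_of_mem_erase ht), mul_assoc]
    rw [← Finset.add_sum_erase _ _ (Finset.mem_univ j), herase, Function.update_self]
    ring

theorem exists_isUnit_weights_sum_eq_zero [Finite (MaximalSpectrum R)] (h2 : IsUnit (2 : R))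
    {x : ι → R} (hx : ∀ M : MaximalSpectrum R, {i | x i ∉ M.asIdeal}.Nontrivial) :
    ∃ a : ι → R, (∀ t, IsUnit (a t)) ∧ ∑ t, a t * x t = 0 := by
  obtain ⟨a, haK, ha⟩ :=
    exists_mem_forall_isUnit (K := LinearMap.ker (Fintype.linearCombination R x)) fun M ↦ by
      obtain ⟨a, ha, hax⟩ := exists_notMem_weights_sum_eq_zero
        (fun hmem ↦ M.isMaximal.ne_top (M.asIdeal.eq_top_of_isUnit_mem hmem h2)) (hx M)
      exact ⟨a, by simpa [Fintype.linearCombination_apply] using hax, ha⟩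
  exact ⟨a, ha, by simpa [Fintype.linearCombination_apply] using haK⟩

end UnitWeights

lemma exists_mulChar_eq_one_weights_sum_eq_zero {ι R R' : Type*} [Fintype ι] [CommRing R]
    [CommRing R'] [Nontrivial R'] {χ : MulChar R R'} (hχ : χ.IsQuadratic) {b x : ι → R}
    (hb : ∀ i, IsUnit (b i)) (hbx : ∑ i, b i * x i = 0)
    (hx : {i | ¬∃ u, χ u = -1 ∧ u * x i = x i}.Subsingleton) :
    ∃ a : ι → R, (∀ i, χ (a i) = 1) ∧ ∑ i, a i * x i = 0 := by
  have hχ_unit {r : R} (hr : IsUnit r) : χ r = 1 ∨ χ r = -1 :=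
    (hχ r).resolve_left (hr.map χ).ne_zero
  obtain ⟨c, hc, hcb⟩ : ∃ c, IsUnit c ∧
      ∀ i, (¬∃ u, χ u = -1 ∧ u * x i = x i) → χ (c * b i) = 1 := by
    rcases hx.eq_empty_or_singleton with hempty | ⟨j, hj⟩
    · exact ⟨1, isUnit_one, fun i hi ↦ (hempty.subset hi).elim⟩
    · refine ⟨b j, hb j, fun i hi ↦ ?_⟩
      obtain rfl : i = j := hj.subset hi
      rcases hχ_unit (hb i) with h | h <;> simp [h]
  have hadjust (i : ι) : ∃ a, χ a = 1 ∧ a * x i = c * b i * x i := by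
    rcases hχ_unit (hc.mul (hb i)) with h | h
    · exact ⟨c * b i, h, rfl⟩
    · by_cases hu : ∃ u, χ u = -1 ∧ u * x i = x i
      · obtain ⟨u, hχu, hux⟩ := hu
        exact ⟨c * b i * u, by rw [map_mul, h, hχu, neg_one_mul, neg_neg], by rw [mul_assoc, hux]⟩
      · exact ⟨c * b i, hcb i hu, rfl⟩
  choose a ha hax using hadjust
  refine ⟨a, ha, ?_⟩
  calc ∑ i, a i * x i = c * ∑ i, b i * x i := by simp only [hax, Finset.mul_sum, mul_assoc]
    _ = 0 := by rw [hbx, mul_zero]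

section ZModWeights

variable {n : ℕ} [NeZero n]

lemma exists_prime_dvd_forall_mem_dvd_val (M : MaximalSpectrum (ZMod n)) :
    ∃ p : ℕ, p.Prime ∧ p ∣ n ∧ ∀ x ∈ M.asIdeal, p ∣ x.val := by
  have := M.isMaximal
  have hcast (k : ℕ) (hk : (k : ZMod n) ∈ M.asIdeal) :
      ringChar (ZMod n ⧸ M.asIdeal) ∣ k := by
    rw [← ringChar.spec, ← map_natCast (Ideal.Quotient.mk M.asIdeal)]
    exact Ideal.Quotient.eq_zero_iff_mem.mpr hk
  refine ⟨_, CharP.char_is_prime (ZMod n ⧸ M.asIdeal) _, hcast n ?_, fun x hx ↦ hcast _ ?_⟩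
  · rw [ZMod.natCast_self]
    exact zero_mem _
  · rwa [ZMod.natCast_zmod_val]

theorem isWZS_USet_of_odd (hodd : Odd n) {l : ℕ} {S : Fin l → ZMod n}
    (hS : ∀ p : ℕ, p.Prime → p ∣ n → {i | (S i).val.Coprime p}.Nontrivial) :
    IsWZS (USet n) S := by
  have h2 : IsUnit (2 : ZMod n) := by
    exact_mod_cast (ZMod.isUnit_iff_coprime 2 n).mpr hodd.coprime_two_left
  refine exists_isUnit_weights_sum_eq_zero h2 fun M ↦ ?_
  obtain ⟨p, hp, hpn, hpM⟩ := exists_prime_dvd_forall_mem_dvd_val M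
  exact (hS p hp hpn).mono fun i hi hmem ↦
    hp.coprime_iff_not_dvd.mp (Nat.Coprime.symm hi) (hpM _ hmem)

variable (n) in
/-- The Jacobi symbol `a ↦ (a/n)` as a multiplicative character on `ZMod n`; the weight set `JSet n`
is its fibre over `1`. -/
def jacobiMulChar : MulChar (ZMod n) ℤ where
  toFun a := jacobiSym a.val n
  map_one' := by
    rw [ZMod.val_one_eq_one_mod, Int.natCast_mod, ← jacobiSym.mod_left, Nat.cast_one,
      jacobiSym.one_left]
  map_mul' a b := by
    rw [ZMod.val_mul, Int.natCast_mod, ← jacobiSym.mod_left, Nat.cast_mul, jacobiSym.mul_left]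
  map_nonunit' a ha := by
    rw [jacobiSym.eq_zero_iff_not_coprime, Int.gcd_natCast_natCast]
    rwa [← ZMod.natCast_zmod_val a, ZMod.isUnit_iff_coprime] at ha

lemma jacobiMulChar_apply (a : ZMod n) : jacobiMulChar n a = jacobiSym a.val n := rfl

lemma jacobiMulChar_intCast (a : ℤ) : jacobiMulChar n a = jacobiSym a n := by
  rw [jacobiMulChar_apply, ZMod.val_intCast, ← jacobiSym.mod_left]

lemma isQuadratic_jacobiMulChar : (jacobiMulChar n).IsQuadratic :=
  fun a ↦ jacobiSym.trichotomy a.val n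

lemma mem_JSet_iff {a : ZMod n} : a ∈ JSet n ↔ jacobiMulChar n a = 1 := by
  refine ⟨And.right, fun ha ↦ ⟨?_, ha⟩⟩
  by_contra hunit
  exact zero_ne_one ((MulChar.map_nonunit _ hunit).symm.trans ha)

end ZModWeights

lemma exists_jacobiSym_mul_eq_neg_one_modEq_one {q m : ℕ} (hq : q.Prime) (hq2 : q ≠ 2)
    (hqm : q.Coprime m) : ∃ u : ℕ, jacobiSym u (q * m) = -1 ∧ u ≡ 1 [MOD m] := by
  have : Fact q.Prime := ⟨hq⟩
  have hm : m ≠ 0 := by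
    rintro rfl
    exact hq.ne_one ((Nat.coprime_zero_right q).mp hqm)
  obtain ⟨g, hg⟩ := FiniteField.exists_nonsquare (F := ZMod q) (by rwa [ZMod.ringChar_zmod_n])
  obtain ⟨u, hug, hum⟩ := Nat.chineseRemainder hqm g.val 1
  have huq : jacobiSym u q = -1 := by
    rw [ZMod.nonsquare_iff_jacobiSym_eq_neg_one]
    have hcast : ((u : ℤ) : ZMod q) = g := by
      simpa using (ZMod.natCast_eq_natCast_iff _ _ _).mpr hug
    rwa [hcast]
  have hu1 : jacobiSym u m = 1 := by
    rw [jacobiSym.mod_left' (a₂ := 1) (by exact_mod_cast hum), jacobiSym.one_left]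
  exact ⟨u, by rw [jacobiSym.mul_right' _ hq.ne_zero hm, huq, hu1, mul_one], hum⟩

lemma exists_jacobiMulChar_eq_neg_one_mul_eq {n q : ℕ} [NeZero n] (hq : q.Prime) (hq2 : q ≠ 2)
    (hqn : n.factorization q = 1) : ∃ u : ZMod n, jacobiMulChar n u = -1 ∧ u * q = q := by
  obtain ⟨u, hu, hum⟩ := exists_jacobiSym_mul_eq_neg_one_modEq_one hq hq2
    (Nat.coprime_ordCompl hq (NeZero.ne n))
  have hn : q * (n / q ^ n.factorization q) = n := by
    simpa only [hqn, pow_one] using Nat.ordProj_mul_ordCompl_eq_self n q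
  rw [hn] at hu
  refine ⟨(u : ℤ), by rw [jacobiMulChar_intCast, hu], ?_⟩
  have hmod : u * q ≡ 1 * q [MOD n] := by
    simpa only [mul_comm _ q, hn] using hum.mul_left' q
  simpa using (ZMod.natCast_eq_natCast_iff _ _ _).mpr hmod

lemma exists_prime_dvd_of_not_isUnit_castHom {n m : ℕ} [NeZero n] (hmn : m ∣ n) {x : ZMod n}
    (hx : ¬IsUnit (ZMod.castHom hmn (ZMod m) x)) :
    ∃ q : ℕ, q.Prime ∧ q ∣ m ∧ (q : ZMod n) ∣ x := by
  rw [ZMod.castHom_apply, ← ZMod.natCast_val, ZMod.isUnit_iff_coprime,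
    Nat.Prime.not_coprime_iff_dvd] at hx
  obtain ⟨q, hq, hqx, hqm⟩ := hx
  exact ⟨q, hq, hqm, by simpa using Nat.cast_dvd_cast (α := ZMod n) hqx⟩

theorem sset_zero_sum_nonsquarefree_general {n m : ℕ} (hodd : Odd n) (hmn : m ∣ n)
    (hm : ∀ q : ℕ, q.Prime → q ∣ m → n.factorization q = 1) {l : ℕ} {S : Fin l → ZMod n}
    (h2 : ∀ p : ℕ, p.Prime → p ∣ n → 2 ≤ {i : Fin l | Nat.Coprime ((S i).val) p}.ncard)
    (h1 : {i : Fin l | IsUnit (ZMod.castHom hmn (ZMod m) (S i))}.ncard ≤ 1) :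
    IsWZS (JSet n) S := by
  have : NeZero n := ⟨hodd.pos.ne'⟩
  obtain ⟨b, hb, hbS⟩ : IsWZS (USet n) S :=
    isWZS_USet_of_odd hodd fun p hp hpn ↦ Set.one_lt_ncard_iff_nontrivial.mp (h2 p hp hpn)
  have htwist (i : Fin l) (hi : ¬IsUnit (ZMod.castHom hmn (ZMod m) (S i))) :
      ∃ u, jacobiMulChar n u = -1 ∧ u * S i = S i := by
    obtain ⟨q, hq, hqm, y, hy⟩ := exists_prime_dvd_of_not_isUnit_castHom hmn hi
    have hq2 : q ≠ 2 := fun h ↦ hodd.not_two_dvd_nat (h ▸ hqm.trans hmn)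
    obtain ⟨u, hu, huq⟩ := exists_jacobiMulChar_eq_neg_one_mul_eq hq hq2 (hm q hq hqm)
    exact ⟨u, hu, by rw [hy, ← mul_assoc, huq]⟩
  obtain ⟨a, ha, haS⟩ := exists_mulChar_eq_one_weights_sum_eq_zero isQuadratic_jacobiMulChar hb hbS
    ((Set.ncard_le_one_iff_subsingleton.mp h1).anti fun i hi ↦ not_imp_comm.mp (htwist i) hi)
  exact ⟨a, fun i ↦ mem_JSet_iff.mpr (ha i), haS⟩

theorem sset_zero_sum_nonsquarefree (n p' : ℕ) (hodd : Odd n) (hp' : p'.Prime)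
    (hp'n : p' ∣ n) (hv : n.factorization p' = 2)
    (hq : ∀ q : ℕ, q.Prime → q ∣ n → q ≠ p' → n.factorization q = 1)
    {l : ℕ} (S : Fin l → ZMod n)
    (h2 : ∀ p : ℕ, p.Prime → p ∣ n → 2 ≤ {i : Fin l | Nat.Coprime ((S i).val) p}.ncard)
    (h1 : {i : Fin l |
        IsUnit (ZMod.castHom
          (Nat.div_dvd_of_dvd (show p' ^ 2 ∣ n by
            rw [← hv]; exact Nat.ordProj_dvd n p'))
          (ZMod (n / p' ^ 2)) (S i))}.ncard ≤ 1) :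
    IsWZS (JSet n) S := by
  refine sset_zero_sum_nonsquarefree_general hodd _ (fun q hqp hqd ↦ ?_) h2 h1
  have hqp' : q ≠ p' := by
    rintro rfl
    exact Nat.not_dvd_ordCompl hqp hodd.pos.ne' (hv ▸ hqd)
  exact hq q hqp (hqd.trans (Nat.div_dvd_of_dvd (hv ▸ Nat.ordProj_dvd n p'))) hqp'
end

section
/- Let n be odd with a unique prime divisor p' such that v_{p'}(n) = 2 and with v_q(n) = 1 for every other prime divisor q of n, and suppose every prime divisor of n is at least 7. Let A = S(n). If ω(n) ≠ 2, then D_A(n) = Ω(n) + 1. -/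
open scoped BigOperators

/-!
The prefix products of the prime factorization of `n` form a sequence of length `Ω(n)` without
`A`-weighted zero-sum subsequence, for any set `A` of units.

For the upper bound, let `g` be the gcd of `n` and the terms of a sequence of more than `Ω(n)`
elements, so that the length plus `Ω(g)` exceeds `Ω(n)`. As long as some set `P` of primes dividing
`n / g` has at most `#P` terms `x` such that some `q ∈ P` does not divide `x / g`, discarding these
terms preserves this inequality. Once no such `P` is left, a weighting that sums to zero modulo
every prime factor of `n`, after division by `g`, lifts to one that sums to zero modulo `n` with the
same residues modulo these primes, because the divided terms are coprime to `n / g`. The Jacobi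
symbols of the weights only depend on their residues modulo the primes with odd exponent in `n`.

It remains to choose the weights modulo each prime so that the product of their quadratic symbols is
`1` at every term. Modulo `q ≥ 7`, Cauchy–Davenport realizes every pattern of signs when `0` or at
least `3` of the divided terms are nonzero, and `P = {q}` excludes a single nonzero term. If two
primes `q` and `q'` have two nonzero terms each, then `P = {q, q'}` shows that these occupy at least
`3` positions, so some position `k` is nonzero modulo `q` only: there `q'` leaves the sign free,
while `q` realizes every prescription of the other signs. Hence the patterns of any two primes with
odd exponent multiply to all patterns.
-/

section SignPatterns

open scoped Pointwise Finset

theorem cauchy_davenport_sum {p : ℕ} [Fact p.Prime] {ι : Type*} (I : Finset ι)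
    (A : ι → Finset (ZMod p)) (hA : ∀ i ∈ I, (A i).Nonempty) :
    min p (∑ i ∈ I, (#(A i) - 1) + 1) ≤ #(∑ i ∈ I, A i) := by
  classical
  induction I using Finset.induction_on with
  | empty => simp
  | insert i I hi ih =>
    have hI : ∀ j ∈ I, (A j).Nonempty := fun j hj => hA j (Finset.mem_insert_of_mem hj)
    have hi_pos : 0 < #(A i) := (hA i (Finset.mem_insert_self i I)).card_pos
    have hI_nonempty : (∑ j ∈ I, A j).Nonempty :=
      Finset.card_pos.mp ((Nat.lt_min.mpr
        ⟨(Fact.out : p.Prime).pos, Nat.succ_pos _⟩).trans_le (ih hI))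
    have hadd := ZMod.cauchy_davenport Fact.out (Finset.card_pos.mp hi_pos) hI_nonempty
    rw [Finset.sum_insert hi, Finset.sum_insert hi]
    have := ih hI
    omega

theorem two_mul_card_fiber_eq_card {G : Type*} [Group G] [Fintype G] {χ : G →* ℤˣ}
    (hχ : Function.Surjective χ) (s : ℤˣ) : 2 * #{g | χ g = s} = Fintype.card G := by
  have hfiber (r : ℤˣ) : #{g | χ g = r} = #{g | χ g = s} :=
    MonoidHom.card_fiber_eq_of_mem_range χ (hχ r) (hχ s)
  calc 2 * #{g | χ g = s} = ∑ r : ℤˣ, #{g | χ g = r} := by simp [hfiber]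
    _ = Fintype.card G :=
        (Finset.card_eq_sum_card_fiberwise fun _ _ => Finset.mem_univ (χ _)).symm

theorem exists_ne_one_map_eq_one {G : Type*} [Group G] [Fintype G] (χ : G →* ℤˣ)
    (hG : 2 < Fintype.card G) : ∃ c ≠ 1, χ c = 1 := by
  by_contra! h
  have hinj : Function.Injective χ :=
    (injective_iff_map_eq_one χ).mpr fun c hc => by_contra fun hc' => h c hc' hc
  exact absurd (Fintype.card_le_of_injective χ hinj) (by simpa using hG)

/-- The quadratic residue symbol modulo `p`, as a homomorphism on the units. -/
noncomputable def quadraticSign (p : ℕ) [Fact p.Prime] : (ZMod p)ˣ →* ℤˣ :=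
  (quadraticChar (ZMod p)).toUnitHom

theorem coe_quadraticSign {p : ℕ} [Fact p.Prime] (u : (ZMod p)ˣ) :
    (quadraticSign p u : ℤ) = quadraticChar (ZMod p) u :=
  MulChar.coe_toUnitHom _ u

theorem quadraticSign_surjective {p : ℕ} [Fact p.Prime] (hp : p ≠ 2) :
    Function.Surjective (quadraticSign p) := by
  obtain ⟨u, hu⟩ := quadraticChar_exists_neg_one' (F := ZMod p) (by rwa [ZMod.ringChar_zmod_n])
  intro s
  rcases Int.units_eq_one_or s with rfl | rfl
  · exact ⟨1, map_one _⟩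
  · exact ⟨u, Units.ext (by rw [coe_quadraticSign, hu]; rfl)⟩

variable {ι F : Type*} [Field F] {χ : Fˣ →* ℤˣ} {I : Finset ι} {y : ι → F}

/-- The sign patterns under `χ` of the unit weightings that make the terms of `y` indexed by `I`
sum to zero. A pattern is recorded on all of `ι`; its values off `I` are unconstrained, so that the
patterns attached to different fields live in the same group `ι → ℤˣ`. -/
def signPatterns (χ : Fˣ →* ℤˣ) (I : Finset ι) (y : ι → F) : Set (ι → ℤˣ) :=
  {e | ∃ w : ι → Fˣ, ∑ t ∈ I, (w t : F) * y t = 0 ∧ ∀ t, χ (w t) = e t}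

theorem sum_update_mul [DecidableEq ι] {k : ι} (hk : k ∈ I) (u : ι → Fˣ) (v : Fˣ) :
    ∑ t ∈ I, (Function.update u k v t : F) * y t = v * y k + ∑ t ∈ I.erase k, (u t : F) * y t := by
  rw [← Finset.add_sum_erase _ _ hk, Function.update_self]
  congr 1
  exact Finset.sum_congr rfl fun t ht => by
    rw [Function.update_of_ne (Finset.ne_of_mem_erase ht)]

/-- If the terms other than `k` sum to zero, rescaling one nonzero term among them by `c ≠ 1` makes
their sum nonzero; the weight of `y k` can then be chosen to cancel it. -/
theorem exists_weights_sum_eq_zero_of_ne_one {k l : ι} (hk : k ∈ I) (hl : l ∈ I) (hlk : l ≠ k)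
    (hyk : y k ≠ 0) (hyl : y l ≠ 0) (u : ι → Fˣ) {c : Fˣ} (hc : c ≠ 1) :
    ∃ w : ι → Fˣ, (∀ t ≠ k, w t = u t ∨ w t = c * u t) ∧ ∑ t ∈ I, (w t : F) * y t = 0 := by
  classical
  obtain ⟨v, hv, hv_sum⟩ : ∃ v : ι → Fˣ, (∀ t, v t = u t ∨ v t = c * u t) ∧
      ∑ t ∈ I.erase k, (v t : F) * y t ≠ 0 := by
    by_cases hu : ∑ t ∈ I.erase k, (u t : F) * y t = 0
    · refine ⟨Function.update u l (c * u l), fun t => ?_, ?_⟩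
      · rcases eq_or_ne t l with rfl | ht <;> simp [*]
      · have hl' : l ∈ I.erase k := Finset.mem_erase.mpr ⟨hlk, hl⟩
        rw [← Finset.add_sum_erase _ _ hl'] at hu
        rw [sum_update_mul hl', eq_neg_of_add_eq_zero_right hu, Units.val_mul,
          show (c : F) * u l * y l + -(u l * y l) = (c - 1) * (u l * y l) by ring]
        have hc' : (c : F) - 1 ≠ 0 := sub_ne_zero.mpr (by simpa using hc)
        exact mul_ne_zero hc' (mul_ne_zero (u l).ne_zero hyl)
    · exact ⟨u, fun t => Or.inl rfl, hu⟩
  refine ⟨Function.update v k (Units.mk0 _ (div_ne_zero (neg_ne_zero.mpr hv_sum) hyk)),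
    fun t ht => by simpa [ht] using hv t, ?_⟩
  rw [sum_update_mul hk, Units.val_mk0, div_mul_cancel₀ _ hyk, neg_add_cancel]

theorem mem_signPatterns_of_eq_of_ne (hχ : Function.Surjective χ) {k : ι} (hyk : y k = 0)
    {e e' : ι → ℤˣ} (he : e ∈ signPatterns χ I y) (h : ∀ t ≠ k, e' t = e t) :
    e' ∈ signPatterns χ I y := by
  classical
  obtain ⟨w, hw_sum, hw⟩ := he
  obtain ⟨v, hv⟩ := hχ (e' k)
  refine ⟨Function.update w k v, ?_, fun t => ?_⟩
  · rw [← hw_sum]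
    refine Finset.sum_congr rfl fun t _ => ?_
    rcases eq_or_ne t k with rfl | ht <;> simp [*]
  · rcases eq_or_ne t k with rfl | ht <;> simp [*]

theorem signPatterns_mul_eq_univ_of_forall_exists {F' : Type*} [Field F'] {χ' : F'ˣ →* ℤˣ}
    {y' : ι → F'} (hχ' : Function.Surjective χ') {k : ι} (hyk' : y' k = 0)
    (hne : (signPatterns χ' I y').Nonempty)
    (h : ∀ e : ι → ℤˣ, ∃ e' ∈ signPatterns χ I y, ∀ t ≠ k, e' t = e t) :
    signPatterns χ I y * signPatterns χ' I y' = Set.univ := by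
  refine Set.eq_univ_of_forall fun e => ?_
  obtain ⟨f, hf⟩ := hne
  obtain ⟨e', he', hee'⟩ := h (e * f⁻¹)
  refine Set.mem_mul.mpr ⟨e', he', e'⁻¹ * e, mem_signPatterns_of_eq_of_ne hχ' hyk' hf ?_, ?_⟩
  · intro t ht
    simp only [Pi.mul_apply, Pi.inv_apply, hee' t ht, mul_inv_rev, inv_inv, inv_mul_cancel_right]
  · exact mul_inv_cancel_left e' e

variable [DecidableEq F]

theorem signPatterns_eq_univ_of_support_eq_empty (hχ : Function.Surjective χ)
    (hy : {t ∈ I | y t ≠ 0} = ∅) : signPatterns χ I y = Set.univ := by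
  refine Set.eq_univ_of_forall fun e => ?_
  choose w hw using fun t => hχ (e t)
  refine ⟨w, Finset.sum_eq_zero fun t ht => ?_, hw⟩
  rw [not_not.mp (Finset.filter_eq_empty_iff.mp hy ht), mul_zero]

theorem signPatterns_eq_univ_of_two_lt_card_support {p : ℕ} [Fact p.Prime]
    {χ : (ZMod p)ˣ →* ℤˣ} {y : ι → ZMod p} (hp : 7 ≤ p) (hχ : Function.Surjective χ)
    (hy : 2 < #{t ∈ I | y t ≠ 0}) : signPatterns χ I y = Set.univ := by
  refine Set.eq_univ_of_forall fun e => ?_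
  let A (t : ι) : Finset (ZMod p) :=
    Finset.image (fun u : (ZMod p)ˣ => (u : ZMod p) * y t) {u | χ u = e t}
  have hfiber (t : ι) : 2 * #{u : (ZMod p)ˣ | χ u = e t} = p - 1 := by
    rw [two_mul_card_fiber_eq_card hχ, ZMod.card_units]
  have hA (t : ι) : (A t).Nonempty :=
    (Finset.card_pos.mp (by have := hfiber t; omega)).image _
  have hA_card (t : ι) (ht : y t ≠ 0) : 2 * #(A t) = p - 1 := by
    have hinj : Function.Injective fun u : (ZMod p)ˣ => (u : ZMod p) * y t :=
      (mul_left_injective₀ ht).comp Units.val_injective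
    rw [Finset.card_image_of_injective _ hinj, hfiber]
  have hsum : p ≤ ∑ t ∈ I, (#(A t) - 1) + 1 :=
    calc p ≤ 3 * ((p - 1) / 2 - 1) + 1 := by
          have := hfiber
          have := (Fact.out : p.Prime).eq_two_or_odd
          omega
      _ ≤ #{t ∈ I | y t ≠ 0} * ((p - 1) / 2 - 1) + 1 := by gcongr; exact hy
      _ = ∑ t ∈ I with y t ≠ 0, (#(A t) - 1) + 1 := by
          rw [Finset.sum_const_nat fun t ht => ?_]
          have := hA_card t (Finset.mem_filter.mp ht).2
          omega
      _ ≤ ∑ t ∈ I, (#(A t) - 1) + 1 := by gcongr; exact Finset.filter_subset _ _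
  have huniv : ∑ t ∈ I, A t = Finset.univ :=
    Finset.eq_univ_of_card _ (le_antisymm (Finset.card_le_univ _) (by
      rw [ZMod.card]; exact (le_min le_rfl hsum).trans (cauchy_davenport_sum I A fun t _ => hA t)))
  have hzero : (0 : ZMod p) ∈ ∑ t ∈ I, (A t : Set (ZMod p)) := by
    rw [← Finset.coe_sum, huniv]; simp
  obtain ⟨a, ha, hsum_a⟩ := (Set.mem_finsetSum _ _ _).mp hzero
  have hw (t : ι) : ∃ u : (ZMod p)ˣ, χ u = e t ∧ (t ∈ I → (u : ZMod p) * y t = a t) := by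
    by_cases ht : t ∈ I
    · simpa [A, ht] using ha ht
    · simpa [ht] using hχ (e t)
  choose w hw_sign hw_mul using hw
  exact ⟨w, by rw [← hsum_a]; exact Finset.sum_congr rfl hw_mul, hw_sign⟩

theorem exists_mem_ne_ne_zero_of_card_support_ne_one (hy : #{t ∈ I | y t ≠ 0} ≠ 1) {k : ι}
    (hk : k ∈ I) (hyk : y k ≠ 0) : ∃ l ∈ I, l ≠ k ∧ y l ≠ 0 := by
  have hk' : k ∈ {t ∈ I | y t ≠ 0} := Finset.mem_filter.mpr ⟨hk, hyk⟩
  have hlt : 1 < #{t ∈ I | y t ≠ 0} := by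
    have := Finset.card_pos.mpr ⟨k, hk'⟩
    omega
  obtain ⟨l, hl, hlk⟩ := Finset.exists_mem_ne hlt k
  exact ⟨l, (Finset.mem_filter.mp hl).1, hlk, (Finset.mem_filter.mp hl).2⟩

theorem signPatterns_nonempty (χ : Fˣ →* ℤˣ) (hF : (-1 : Fˣ) ≠ 1)
    (hy : #{t ∈ I | y t ≠ 0} ≠ 1) : (signPatterns χ I y).Nonempty := by
  suffices ∃ w : ι → Fˣ, ∑ t ∈ I, (w t : F) * y t = 0 from
    this.imp' (fun w t => χ (w t)) fun w hw => ⟨w, hw, fun _ => rfl⟩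
  by_cases h : ∃ k ∈ I, y k ≠ 0
  · obtain ⟨k, hk, hyk⟩ := h
    obtain ⟨l, hl, hlk, hyl⟩ := exists_mem_ne_ne_zero_of_card_support_ne_one hy hk hyk
    obtain ⟨w, -, hw⟩ := exists_weights_sum_eq_zero_of_ne_one hk hl hlk hyk hyl 1 hF
    exact ⟨w, hw⟩
  · push Not at h
    exact ⟨1, Finset.sum_eq_zero fun t ht => by rw [h t ht, mul_zero]⟩

theorem exists_mem_signPatterns_eq_of_ne (hχ : Function.Surjective χ)
    (hker : ∃ c ≠ 1, χ c = 1) (hy : #{t ∈ I | y t ≠ 0} ≠ 1) {k : ι} (hk : k ∈ I)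
    (hyk : y k ≠ 0) (e : ι → ℤˣ) : ∃ e' ∈ signPatterns χ I y, ∀ t ≠ k, e' t = e t := by
  obtain ⟨c, hc, hχc⟩ := hker
  obtain ⟨l, hl, hlk, hyl⟩ := exists_mem_ne_ne_zero_of_card_support_ne_one hy hk hyk
  choose u hu using fun t => hχ (e t)
  obtain ⟨w, hw, hw_sum⟩ := exists_weights_sum_eq_zero_of_ne_one hk hl hlk hyk hyl u hc
  refine ⟨fun t => χ (w t), ⟨w, hw_sum, fun _ => rfl⟩, fun t ht => ?_⟩
  rcases hw t ht with h | h <;> simp [h, hu, hχc]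

variable {p p' : ℕ} [Fact p.Prime] [Fact p'.Prime]

theorem signPatterns_quadraticSign_eq_univ {y : ι → ZMod p} (hp : 7 ≤ p)
    (hy₁ : #{t ∈ I | y t ≠ 0} ≠ 1) (hy₂ : #{t ∈ I | y t ≠ 0} ≠ 2) :
    signPatterns (quadraticSign p) I y = Set.univ := by
  have hχ : Function.Surjective (quadraticSign p) := quadraticSign_surjective (by lia)
  rcases Finset.eq_empty_or_nonempty {t ∈ I | y t ≠ 0} with hy | hy
  · exact signPatterns_eq_univ_of_support_eq_empty hχ hy
  · have := hy.card_pos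
    exact signPatterns_eq_univ_of_two_lt_card_support hp hχ (by lia)

theorem signPatterns_quadraticSign_nonempty {y : ι → ZMod p} (hp : p ≠ 2)
    (hy : #{t ∈ I | y t ≠ 0} ≠ 1) : (signPatterns (quadraticSign p) I y).Nonempty := by
  have : Fact (2 < p) := ⟨(Fact.out : p.Prime).two_le.lt_of_ne' hp⟩
  exact signPatterns_nonempty _ (fun h => ZMod.neg_one_ne_one (congrArg Units.val h)) hy

theorem signPatterns_quadraticSign_mul_eq_univ {y : ι → ZMod p} {y' : ι → ZMod p'} (hp : 7 ≤ p)
    (hp' : 7 ≤ p') (hy : #{t ∈ I | y t ≠ 0} ≠ 1) (hy' : #{t ∈ I | y' t ≠ 0} ≠ 1)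
    (hyy' : (∃ t ∈ I, y t ≠ 0) → (∃ t ∈ I, y' t ≠ 0) → 2 < #{t ∈ I | y t ≠ 0 ∨ y' t ≠ 0}) :
    signPatterns (quadraticSign p) I y * signPatterns (quadraticSign p') I y' = Set.univ := by
  have hne := signPatterns_quadraticSign_nonempty (by lia) hy
  have hne' := signPatterns_quadraticSign_nonempty (by lia) hy'
  by_cases hy₂ : #{t ∈ I | y t ≠ 0} = 2
  case neg => rw [signPatterns_quadraticSign_eq_univ hp hy hy₂, Set.univ_mul hne']
  by_cases hy₂' : #{t ∈ I | y' t ≠ 0} = 2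
  case neg => rw [signPatterns_quadraticSign_eq_univ hp' hy' hy₂', Set.mul_univ hne]
  obtain ⟨k, hk, hyk, hyk'⟩ : ∃ k ∈ I, y k ≠ 0 ∧ y' k = 0 := by
    have hlt : #{t ∈ I | y' t ≠ 0} < #{t ∈ I | y t ≠ 0 ∨ y' t ≠ 0} :=
      hy₂'.trans_lt (hyy' (Finset.filter_nonempty_iff.mp (Finset.card_pos.mp (by lia)))
        (Finset.filter_nonempty_iff.mp (Finset.card_pos.mp (by lia))))
    obtain ⟨k, hk, hk'⟩ := Finset.exists_mem_notMem_of_card_lt_card hlt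
    simp only [Finset.mem_filter] at hk hk'
    tauto
  have hker : ∃ c ≠ 1, quadraticSign p c = 1 :=
    exists_ne_one_map_eq_one _ (by rw [ZMod.card_units]; lia)
  exact signPatterns_mul_eq_univ_of_forall_exists (quadraticSign_surjective (by lia)) hyk' hne'
    (exists_mem_signPatterns_eq_of_ne (quadraticSign_surjective (by lia)) hker hy hk hyk)

theorem exists_forall_mem_prod_eq_one {α G : Type*} [CommGroup G] {M : Finset α} {E : α → Set G}
    (hE : ∀ i, (E i).Nonempty) {i j : α} (hi : i ∈ M) (hj : j ∈ M) (hij : i ≠ j)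
    (hmul : E i * E j = Set.univ) : ∃ e : α → G, (∀ i, e i ∈ E i) ∧ ∏ i ∈ M, e i = 1 := by
  classical
  choose f hf using hE
  obtain ⟨a, ha, b, hb, hab⟩ := Set.mem_mul.mp
    (hmul ▸ Set.mem_univ (∏ s ∈ (M.erase i).erase j, f s)⁻¹)
  have hj' : j ∈ M.erase i := Finset.mem_erase.mpr ⟨hij.symm, hj⟩
  refine ⟨Function.update (Function.update f j b) i a, fun s => ?_, ?_⟩
  · rcases eq_or_ne s i with rfl | hsi
    · simpa using ha
    · rcases eq_or_ne s j with rfl | hsj <;> simp [*]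
  · rw [Finset.prod_update_of_mem hi, Finset.sdiff_singleton_eq_erase,
      Finset.prod_update_of_mem hj', Finset.sdiff_singleton_eq_erase, ← mul_assoc, hab,
      inv_mul_cancel]

theorem exists_weights_prod_quadraticSign_eq_one {α : Type*} {p : α → ℕ}
    [∀ q, Fact (p q).Prime] {M : Finset α} {y : ∀ q, ι → ZMod (p q)} (hp : ∀ q, p q ≠ 2)
    (hM : #M ≠ 1) (hM7 : ∀ q ∈ M, 7 ≤ p q) (hy : ∀ q, #{t ∈ I | y q t ≠ 0} ≠ 1)
    (hyy : ∀ q ∈ M, ∀ q' ∈ M, q ≠ q' → (∃ t ∈ I, y q t ≠ 0) → (∃ t ∈ I, y q' t ≠ 0) →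
      2 < #{t ∈ I | y q t ≠ 0 ∨ y q' t ≠ 0}) :
    ∃ w : ∀ q, ι → (ZMod (p q))ˣ, (∀ q, ∑ t ∈ I, (w q t : ZMod (p q)) * y q t = 0) ∧
      ∀ t, ∏ q ∈ M, quadraticSign (p q) (w q t) = 1 := by
  have hne (q : α) : (signPatterns (quadraticSign (p q)) I (y q)).Nonempty :=
    signPatterns_quadraticSign_nonempty (hp q) (hy q)
  suffices ∃ e : α → ι → ℤˣ, (∀ q, e q ∈ signPatterns (quadraticSign (p q)) I (y q)) ∧
      ∏ q ∈ M, e q = 1 by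
    obtain ⟨e, he, he_prod⟩ := this
    choose w hw_sum hw using he
    refine ⟨w, hw_sum, fun t => ?_⟩
    rw [Finset.prod_congr rfl fun q _ => hw q t, ← Finset.prod_apply, he_prod, Pi.one_apply]
  rcases M.eq_empty_or_nonempty with rfl | hM_nonempty
  · choose e he using hne
    exact ⟨e, he, Finset.prod_empty⟩
  · obtain ⟨q, hq, q', hq', hqq'⟩ := Finset.one_lt_card.mp
      (Nat.lt_of_le_of_ne hM_nonempty.card_pos hM.symm)
    exact exists_forall_mem_prod_eq_one hne hq hq' hqq' (signPatterns_quadraticSign_mul_eq_univ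
      (hM7 q hq) (hM7 q' hq') (hy q) (hy q') (hyy q hq q' hq' hqq'))

end SignPatterns

section Reduction

open scoped Finset ArithmeticFunction.Omega

variable {ι : Type*} {n : ℕ} {x : ι → ℤ}

/-- The gcd of `n` and the terms of `x` indexed by `I`, that is, the generator dividing `n` of the
ideal that these terms span in `ZMod n`. -/
def seqGcd (n : ℕ) (x : ι → ℤ) (I : Finset ι) : ℕ :=
  Int.gcd n (I.gcd x)

theorem seqGcd_dvd (n : ℕ) (x : ι → ℤ) (I : Finset ι) : seqGcd n x I ∣ n :=
  Int.natCast_dvd_natCast.mp (Int.gcd_dvd_left ..)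

theorem seqGcd_ne_zero (hn : n ≠ 0) (x : ι → ℤ) (I : Finset ι) : seqGcd n x I ≠ 0 :=
  ne_zero_of_dvd_ne_zero hn (seqGcd_dvd n x I)

theorem seqGcd_dvd_apply (n : ℕ) (x : ι → ℤ) {I : Finset ι} {t : ι} (ht : t ∈ I) :
    (seqGcd n x I : ℤ) ∣ x t :=
  (Int.gcd_dvd_right ..).trans (Finset.gcd_dvd ht)

theorem dvd_seqGcd {I : Finset ι} {d : ℕ} (hd : d ∣ n) (hdx : ∀ t ∈ I, (d : ℤ) ∣ x t) :
    d ∣ seqGcd n x I :=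
  Int.natCast_dvd_natCast.mp
    (Int.dvd_coe_gcd (Int.natCast_dvd_natCast.mpr hd) (Finset.dvd_gcd hdx))

theorem seqGcd_empty (n : ℕ) (x : ι → ℤ) : seqGcd n x ∅ = n := by
  simp [seqGcd]

theorem cardFactors_le_of_dvd {a b : ℕ} (hb : b ≠ 0) (h : a ∣ b) : Ω a ≤ Ω b := by
  obtain ⟨c, rfl⟩ := h
  rw [ArithmeticFunction.cardFactors_mul (left_ne_zero_of_mul hb) (right_ne_zero_of_mul hb)]
  exact Nat.le_add_right _ _

theorem cardFactors_mul_prod_primes {g : ℕ} (hg : g ≠ 0) {P : Finset ℕ}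
    (hP : ∀ q ∈ P, q.Prime) : Ω (g * ∏ q ∈ P, q) = Ω g + #P := by
  have hprod : ∏ q ∈ P, q ≠ 0 := Finset.prod_ne_zero_iff.mpr fun q hq => (hP q hq).ne_zero
  rw [ArithmeticFunction.cardFactors_mul hg hprod, Finset.prod_eq_multiset_prod, Multiset.map_id',
    ArithmeticFunction.cardFactors_multiset_prod (by simpa using hprod)]
  congr 1
  rw [Finset.sum_map_val, Finset.card_eq_sum_ones]
  exact Finset.sum_congr rfl fun q hq => ArithmeticFunction.cardFactors_apply_prime (hP q hq)

theorem natCast_prod_primes_dvd {P : Finset ℕ} (hP : ∀ q ∈ P, q.Prime) {m : ℤ}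
    (h : ∀ q ∈ P, (q : ℤ) ∣ m) : ((∏ q ∈ P, q : ℕ) : ℤ) ∣ m :=
  Int.natCast_dvd.mpr (Finset.prod_primes_dvd _ (fun q hq => (hP q hq).prime)
    fun q hq => Int.natCast_dvd.mp (h q hq))

theorem natCast_mul_prod_primes_dvd {g : ℕ} (hg : g ≠ 0) {P : Finset ℕ}
    (hP : ∀ q ∈ P, q.Prime) {m : ℤ} (hm : (g : ℤ) ∣ m) (h : ∀ q ∈ P, ((g * q : ℕ) : ℤ) ∣ m) :
    ((g * ∏ q ∈ P, q : ℕ) : ℤ) ∣ m := by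
  obtain ⟨m, rfl⟩ := hm
  have hg' : (g : ℤ) ≠ 0 := mod_cast hg
  simp only [Nat.cast_mul, mul_dvd_mul_iff_left hg'] at h ⊢
  exact natCast_prod_primes_dvd hP h

theorem mul_prod_dvd_seqGcd_filter (hn : n ≠ 0) {I : Finset ι} {P : Finset ℕ}
    (hP : P ⊆ (n / seqGcd n x I).primeFactors) :
    seqGcd n x I * ∏ q ∈ P, q ∣
      seqGcd n x {t ∈ I | ∀ q ∈ P, ((seqGcd n x I * q : ℕ) : ℤ) ∣ x t} := by
  have hprime (q : ℕ) (hq : q ∈ P) : q.Prime := Nat.prime_of_mem_primeFactors (hP hq)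
  refine dvd_seqGcd ?_ fun t ht => ?_
  · refine Nat.mul_dvd_of_dvd_div (seqGcd_dvd n x I) ?_
    exact Finset.prod_primes_dvd _ (fun q hq => (hprime q hq).prime)
      fun q hq => Nat.dvd_of_mem_primeFactors (hP hq)
  · rw [Finset.mem_filter] at ht
    exact natCast_mul_prod_primes_dvd (seqGcd_ne_zero hn x I) hprime (seqGcd_dvd_apply n x ht.1)
      ht.2

/-- The Hall-type condition on the terms of `x` indexed by `I`: for every nonempty set `P` of primes
dividing `n / g`, where `g` is the gcd of `n` and these terms, more than `#P` of the terms divided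
by `g` are nonzero modulo some prime of `P`. -/
def HallCondition (n : ℕ) (x : ι → ℤ) (I : Finset ι) : Prop :=
  ∀ P ⊆ (n / seqGcd n x I).primeFactors, P.Nonempty →
    #P < #{t ∈ I | ∃ q ∈ P, ¬ ((seqGcd n x I * q : ℕ) : ℤ) ∣ x t}

/-- If the condition fails for `I` and `P`, then discarding the at most `#P` terms counted in it
multiplies the gcd by at least `∏ q ∈ P, q`, so the assumption persists. -/
theorem exists_subset_hallCondition (hn : n ≠ 0) {I : Finset ι}
    (hI : Ω n < #I + Ω (seqGcd n x I)) :
    ∃ J ⊆ I, J.Nonempty ∧ HallCondition n x J := by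
  induction I using Finset.strongInduction with
  | H I ih =>
    by_cases hI_hall : HallCondition n x I
    case pos =>
      refine ⟨I, subset_rfl, Finset.nonempty_iff_ne_empty.mpr ?_, hI_hall⟩
      rintro rfl
      simp [seqGcd_empty] at hI
    unfold HallCondition at hI_hall
    push Not at hI_hall
    obtain ⟨P, hP, hP_nonempty, hcard⟩ := hI_hall
    let K : Finset ι := {t ∈ I | ∀ q ∈ P, ((seqGcd n x I * q : ℕ) : ℤ) ∣ x t}
    have hcard_K : #I ≤ #K + #P := by
      rw [← Finset.card_filter_add_card_filter_not
        (s := I) (p := fun t => ∀ q ∈ P, ((seqGcd n x I * q : ℕ) : ℤ) ∣ x t)]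
      push Not
      gcongr
    have hdvd : seqGcd n x I * ∏ q ∈ P, q ∣ seqGcd n x K := mul_prod_dvd_seqGcd_filter hn hP
    have hΩ_K : Ω (seqGcd n x I) + #P ≤ Ω (seqGcd n x K) := by
      rw [← cardFactors_mul_prod_primes (seqGcd_ne_zero hn x I)
        fun q hq => Nat.prime_of_mem_primeFactors (hP hq)]
      exact cardFactors_le_of_dvd (seqGcd_ne_zero hn x K) hdvd
    have hKI : K ⊂ I := by
      refine (Finset.filter_subset _ _).ssubset_of_ne fun hKI : K = I => ?_
      rw [hKI] at hΩ_K
      have := hP_nonempty.card_pos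
      lia
    obtain ⟨J, hJK, hJ⟩ := ih K hKI (by lia)
    exact ⟨J, hJK.trans hKI.1, hJ⟩

/-- The `t`-th term of `x` divided by the gcd of `n` and the terms indexed by `I`, modulo `q`. When
`q` does not divide the corresponding quotient of `n`, no condition modulo `q` is left and the value
is set to `0`. -/
def reducedTerm (n : ℕ) (x : ι → ℤ) (I : Finset ι) (q : ℕ) (t : ι) : ZMod q :=
  if q ∣ n / seqGcd n x I then ((x t / (seqGcd n x I : ℤ) : ℤ) : ZMod q) else 0

theorem reducedTerm_of_dvd {I : Finset ι} {q : ℕ} (hq : q ∣ n / seqGcd n x I) (t : ι) :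
    reducedTerm n x I q t = ((x t / (seqGcd n x I : ℤ) : ℤ) : ZMod q) :=
  if_pos hq

theorem reducedTerm_ne_zero_iff (hn : n ≠ 0) {I : Finset ι} {q : ℕ} {t : ι} (ht : t ∈ I) :
    reducedTerm n x I q t ≠ 0 ↔
      q ∣ n / seqGcd n x I ∧ ¬ ((seqGcd n x I * q : ℕ) : ℤ) ∣ x t := by
  have hg : (seqGcd n x I : ℤ) ≠ 0 := mod_cast seqGcd_ne_zero hn x I
  by_cases hq : q ∣ n / seqGcd n x I
  · rw [reducedTerm_of_dvd hq, Ne, ZMod.intCast_zmod_eq_zero_iff_dvd, Nat.cast_mul,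
      ← mul_dvd_mul_iff_left hg, Int.mul_ediv_cancel' (seqGcd_dvd_apply n x ht)]
    tauto
  · simp [reducedTerm, hq]

theorem mem_primeFactors_div_seqGcd (hn : n ≠ 0) {I : Finset ι} {q : ℕ} (hq : q.Prime)
    (hqn : q ∣ n / seqGcd n x I) : q ∈ (n / seqGcd n x I).primeFactors :=
  Nat.mem_primeFactors.mpr ⟨hq, hqn, (Nat.div_ne_zero_iff_of_dvd (seqGcd_dvd n x I)).mpr
    ⟨hn, seqGcd_ne_zero hn x I⟩⟩

theorem HallCondition.card_support_ne_one {I : Finset ι} (hI : HallCondition n x I) (hn : n ≠ 0)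
    {q : ℕ} (hq : q.Prime) : #{t ∈ I | reducedTerm n x I q t ≠ 0} ≠ 1 := by
  by_cases hqn : q ∣ n / seqGcd n x I
  · have := hI {q} (by simpa using mem_primeFactors_div_seqGcd hn hq hqn)
      (Finset.singleton_nonempty q)
    rw [Finset.card_singleton] at this
    refine (this.trans_eq (congrArg _ (Finset.filter_congr fun t ht => ?_))).ne'
    simp [reducedTerm_ne_zero_iff hn ht, hqn]
  · simp [reducedTerm, hqn]

theorem HallCondition.two_lt_card_support_or {I : Finset ι} (hI : HallCondition n x I) (hn : n ≠ 0)
    {q q' : ℕ} (hq : q.Prime) (hq' : q'.Prime) (hqq' : q ≠ q')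
    (hy : ∃ t ∈ I, reducedTerm n x I q t ≠ 0) (hy' : ∃ t ∈ I, reducedTerm n x I q' t ≠ 0) :
    2 < #{t ∈ I | reducedTerm n x I q t ≠ 0 ∨ reducedTerm n x I q' t ≠ 0} := by
  obtain ⟨t, ht, hyt⟩ := hy
  obtain ⟨t', ht', hyt'⟩ := hy'
  have hqn := ((reducedTerm_ne_zero_iff hn ht).mp hyt).1
  have hqn' := ((reducedTerm_ne_zero_iff hn ht').mp hyt').1
  have hP : {q, q'} ⊆ (n / seqGcd n x I).primeFactors :=
    Finset.insert_subset (mem_primeFactors_div_seqGcd hn hq hqn)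
      (Finset.singleton_subset_iff.mpr (mem_primeFactors_div_seqGcd hn hq' hqn'))
  have := hI {q, q'} hP (Finset.insert_nonempty ..)
  rw [Finset.card_pair hqq'] at this
  refine this.trans_eq (congrArg _ (Finset.filter_congr fun t ht => ?_))
  simp [reducedTerm_ne_zero_iff hn ht, hqn, hqn']

end Reduction

section Lifting

variable {ι : Type*}

/-- Bézout coefficients `d` let one correct the part `r * u` of the error of a weighting `a` without
changing its residues modulo `r`. -/
theorem exists_dvd_sub_and_dvd_sum {R : Type*} [CommRing R] {I : Finset ι} {N r u v : R}
    {a d z : ι → R} (hd : N ∣ 1 - ∑ t ∈ I, d t * z t)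
    (ha : ∑ t ∈ I, a t * z t = r * u + N * v) :
    ∃ b : ι → R, (∀ t, r ∣ b t - a t) ∧ N ∣ ∑ t ∈ I, b t * z t := by
  refine ⟨fun t => a t - r * u * d t, fun t => ⟨-(u * d t), by ring⟩, ?_⟩
  have hsum : ∑ t ∈ I, (a t - r * u * d t) * z t =
      r * u * (1 - ∑ t ∈ I, d t * z t) + N * v := by
    simp only [sub_mul, Finset.sum_sub_distrib, mul_assoc, ← Finset.mul_sum] at ha ⊢
    rw [ha]
    ring
  rw [hsum]
  exact (hd.mul_left _).add (dvd_mul_right _ _)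

theorem exists_dvd_one_sub_sum {n : ℕ} (hn : n ≠ 0) (x : ι → ℤ) (I : Finset ι) :
    ∃ d : ι → ℤ, ((n / seqGcd n x I : ℕ) : ℤ) ∣
      1 - ∑ t ∈ I, d t * (x t / (seqGcd n x I : ℤ)) := by
  obtain ⟨c, hc⟩ := Finset.gcd_eq_sum_mul I x
  have hbezout := Int.gcd_eq_gcd_ab n (I.gcd x)
  have hg : (seqGcd n x I : ℤ) ≠ 0 := mod_cast seqGcd_ne_zero hn x I
  set A := Int.gcdA n (I.gcd x)
  set B := Int.gcdB n (I.gcd x)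
  refine ⟨fun t => B * c t, A, mul_left_cancel₀ hg ?_⟩
  have hx : ∑ t ∈ I, seqGcd n x I * (B * c t * (x t / (seqGcd n x I : ℤ))) = I.gcd x * B := by
    rw [hc, Finset.sum_mul]
    refine Finset.sum_congr rfl fun t ht => ?_
    rw [mul_left_comm, Int.mul_ediv_cancel' (seqGcd_dvd_apply n x ht)]
    ring
  rw [mul_sub, mul_one, Finset.mul_sum, hx, ← mul_assoc, ← Nat.cast_mul,
    Nat.mul_div_cancel' (seqGcd_dvd n x I), seqGcd, hbezout]
  ring

theorem exists_intCast_eq_of_pairwise_coprime {α : Type*} [Finite α] {m : α → ℕ}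
    (hm : Pairwise (Function.onFun Nat.Coprime m)) (r : ∀ i, ZMod (m i)) :
    ∃ a : ℤ, ∀ i, (a : ZMod (m i)) = r i := by
  have := Fintype.ofFinite α
  obtain ⟨a, ha⟩ := ZMod.intCast_surjective ((ZMod.prodEquivPi m hm).symm r)
  have har : (a : ∀ i, ZMod (m i)) = r := by
    rw [← map_intCast (ZMod.prodEquivPi m hm), ha, RingEquiv.apply_symm_apply]
  exact ⟨a, congrFun har⟩

theorem natCast_dvd_of_squarefree {m : ℕ} (hm : Squarefree m) {a : ℤ}
    (h : ∀ q ∈ m.primeFactors, (q : ℤ) ∣ a) : (m : ℤ) ∣ a := by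
  rw [← Nat.prod_primeFactors_of_squarefree hm]
  exact natCast_prod_primes_dvd (fun _ => Nat.prime_of_mem_primeFactors) h

theorem exists_eq_squarefree_mul_add_mul {r N : ℕ} (hr : Squarefree r) (hN : N ≠ 0) {s : ℤ}
    (hs : ∀ q ∈ N.primeFactors, (q : ℤ) ∣ s) : ∃ u v, s = (r : ℤ) * u + N * v := by
  have hgcd : ((Nat.gcd r N : ℕ) : ℤ) ∣ s :=
    natCast_dvd_of_squarefree (hr.squarefree_of_dvd (Nat.gcd_dvd_left _ _))
      fun q hq => hs q (Nat.primeFactors_mono (Nat.gcd_dvd_right _ _) hN hq)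
  rwa [← Int.gcd_natCast_natCast, Int.coe_gcd, gcd_dvd_iff_exists] at hgcd

theorem exists_lift_of_forall_prime {n : ℕ} (hn : n ≠ 0) (x : ι → ℤ) (I : Finset ι)
    (w : ∀ q : n.primeFactors, ι → ZMod q)
    (hw : ∀ q, ∑ t ∈ I, w q t * reducedTerm n x I q t = 0) :
    ∃ b : ι → ℤ, (∀ q : n.primeFactors, ∀ t, (b t : ZMod q) = w q t) ∧
      (n : ℤ) ∣ ∑ t ∈ I, b t * x t := by
  have hcoprime : Pairwise (Function.onFun Nat.Coprime ((↑) : n.primeFactors → ℕ)) :=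
    fun q q' hqq' => (Nat.coprime_primes (Nat.prime_of_mem_primeFactors q.2)
      (Nat.prime_of_mem_primeFactors q'.2)).mpr (Subtype.coe_ne_coe.mpr hqq')
  choose a ha using fun t => exists_intCast_eq_of_pairwise_coprime hcoprime fun q => w q t
  set g := seqGcd n x I
  have hgn : g ∣ n := seqGcd_dvd n x I
  have hN : n / g ≠ 0 := (Nat.div_ne_zero_iff_of_dvd hgn).mpr ⟨hn, seqGcd_ne_zero hn x I⟩
  obtain ⟨d, hd⟩ := exists_dvd_one_sub_sum hn x I
  have hs (q : ℕ) (hq : q ∈ (n / g).primeFactors) : (q : ℤ) ∣ ∑ t ∈ I, a t * (x t / (g : ℤ)) := by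
    let q' : n.primeFactors := ⟨q, Nat.primeFactors_mono (Nat.div_dvd_of_dvd hgn) hn hq⟩
    rw [← ZMod.intCast_zmod_eq_zero_iff_dvd, Int.cast_sum]
    refine (Finset.sum_congr rfl fun t _ => ?_).trans (hw q')
    rw [Int.cast_mul, reducedTerm_of_dvd (Nat.dvd_of_mem_primeFactors hq), ← ha t q']
  obtain ⟨u, v, huv⟩ := exists_eq_squarefree_mul_add_mul
    (UniqueFactorizationMonoid.squarefree_radical (a := n)) hN hs
  obtain ⟨b, hba, hb⟩ := exists_dvd_sub_and_dvd_sum hd huv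
  refine ⟨b, fun q t => ?_, ?_⟩
  · have hq : (q : ℕ) ∣ UniqueFactorizationMonoid.radical n :=
      (UniqueFactorizationMonoid.dvd_radical_iff_of_irreducible
        (Nat.prime_of_mem_primeFactors q.2) hn).mpr (Nat.dvd_of_mem_primeFactors q.2)
    rw [← ha t q, eq_comm, ZMod.intCast_eq_intCast_iff_dvd_sub]
    exact (Int.natCast_dvd_natCast.mpr hq).trans (hba t)
  · have hsum : ∑ t ∈ I, b t * x t = g * ∑ t ∈ I, b t * (x t / (g : ℤ)) := by
      rw [Finset.mul_sum]
      refine Finset.sum_congr rfl fun t ht => ?_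
      rw [mul_left_comm, Int.mul_ediv_cancel' (seqGcd_dvd_apply n x ht)]
    rw [hsum, ← Nat.mul_div_cancel' hgn, Nat.cast_mul]
    exact mul_dvd_mul_left _ hb

end Lifting

section Davenport

open scoped Finset ArithmeticFunction.Omega

variable {n : ℕ}

theorem jacobiSym_eq_prod_primeFactors (a : ℤ) (hn : n ≠ 0) :
    jacobiSym a n = ∏ q ∈ n.primeFactors, jacobiSym a q ^ n.factorization q := by
  conv_lhs => rw [← Nat.prod_primeFactorsList hn]
  rw [jacobiSym.list_prod_right fun q hq => (Nat.pos_of_mem_primeFactorsList hq).ne',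
    Finset.prod_list_map_count]
  simp only [Nat.primeFactorsList_count_eq, Nat.primeFactors]

theorem jacobiSym_eq_quadraticSign {q : ℕ} [Fact q.Prime] {a : ℤ} {u : (ZMod q)ˣ}
    (ha : (a : ZMod q) = u) : jacobiSym a q = quadraticSign q u := by
  rw [coe_quadraticSign, ← ha, ← jacobiSym.legendreSym.to_jacobiSym, legendreSym]

theorem jacobiSym_eq_prod_quadraticSign [∀ q : n.primeFactors, Fact (q : ℕ).Prime] (hn : n ≠ 0)
    {a : ℤ} {w : ∀ q : n.primeFactors, (ZMod q)ˣ}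
    (ha : ∀ q : n.primeFactors, (a : ZMod q) = w q) :
    jacobiSym a n =
      (∏ q ∈ ({q | Odd (n.factorization q)} : Finset n.primeFactors),
        quadraticSign q (w q) : ℤˣ) := by
  rw [jacobiSym_eq_prod_primeFactors a hn, ← Finset.prod_coe_sort, Finset.prod_filter,
    Units.coe_prod]
  refine Finset.prod_congr rfl fun q _ => ?_
  rw [jacobiSym_eq_quadraticSign (ha q)]
  rw [← Units.val_pow_eq_pow_val]
  split_ifs with h
  · rw [Int.units_pow_eq_pow_mod_two, Nat.odd_iff.mp h, pow_one]
  · rw [Int.units_pow_eq_pow_mod_two, Nat.not_odd_iff.mp h, pow_zero]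

theorem intCast_mem_JSet (hn : n ≠ 0) {a : ℤ} (ha : jacobiSym a n = 1) : (a : ZMod n) ∈ JSet n := by
  have : NeZero n := ⟨hn⟩
  refine ⟨?_, by rwa [ZMod.val_intCast, ← jacobiSym.mod_left]⟩
  rw [ZMod.coe_int_isUnit_iff_isCoprime, isCoprime_comm, Int.isCoprime_iff_gcd_eq_one]
  by_contra h
  rw [jacobiSym.eq_zero_iff_not_coprime.mpr h] at ha
  exact zero_ne_one ha

theorem HallCondition.exists_jacobiSym_eq_one {ι : Type*} {x : ι → ℤ} {I : Finset ι}
    (hI : HallCondition n x I) (hodd : Odd n)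
    (h7 : ∀ q ∈ n.primeFactors, Odd (n.factorization q) → 7 ≤ q)
    (hcard : #{q ∈ n.primeFactors | Odd (n.factorization q)} ≠ 1) :
    ∃ b : ι → ℤ, (∀ t, jacobiSym (b t) n = 1) ∧ (n : ℤ) ∣ ∑ t ∈ I, b t * x t := by
  have hn : n ≠ 0 := hodd.pos.ne'
  have hprime (q : n.primeFactors) : Fact (q : ℕ).Prime := ⟨Nat.prime_of_mem_primeFactors q.2⟩
  have hne_two (q : n.primeFactors) : (q : ℕ) ≠ 2 :=
    (hodd.of_dvd_nat (Nat.dvd_of_mem_primeFactors q.2)).ne_two_of_dvd_nat dvd_rfl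
  have hcard' : #{q : n.primeFactors | Odd (n.factorization q)} ≠ 1 := by
    rw [Finset.card_filter] at hcard ⊢
    rwa [Finset.sum_coe_sort n.primeFactors fun q => if Odd (n.factorization q) then 1 else 0]
  obtain ⟨w, hw_sum, hw⟩ := exists_weights_prod_quadraticSign_eq_one (I := I)
    (y := fun q : n.primeFactors => reducedTerm n x I q) hne_two hcard'
    (fun q hq => h7 q q.2 (Finset.mem_filter.mp hq).2)
    (fun q => hI.card_support_ne_one hn (hprime q).out)
    (fun q _ q' _ hqq' => hI.two_lt_card_support_or hn (hprime q).out (hprime q').out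
      (Subtype.coe_ne_coe.mpr hqq'))
  obtain ⟨b, hb, hb_sum⟩ := exists_lift_of_forall_prime hn x I (fun q t => w q t) hw_sum
  refine ⟨b, fun t => ?_, hb_sum⟩
  rw [jacobiSym_eq_prod_quadraticSign hn fun q => hb q t, hw t, Units.val_one]

theorem hasWZSSub_JSet_of_cardFactors_lt (hodd : Odd n)
    (h7 : ∀ q ∈ n.primeFactors, Odd (n.factorization q) → 7 ≤ q)
    (hcard : #{q ∈ n.primeFactors | Odd (n.factorization q)} ≠ 1) {l : ℕ} (hl : Ω n < l)
    (S : Fin l → ZMod n) : HasWZSSub (JSet n) S := by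
  have hn : n ≠ 0 := hodd.pos.ne'
  obtain ⟨J, -, hJ_nonempty, hJ⟩ := exists_subset_hallCondition (x := fun i => ((S i).cast : ℤ))
    (I := Finset.univ) hn (by rw [Finset.card_fin]; lia)
  obtain ⟨b, hb, hb_sum⟩ := hJ.exists_jacobiSym_eq_one hodd h7 hcard
  refine ⟨J, hJ_nonempty, fun i => b i, fun i _ => intCast_mem_JSet hn (hb i), ?_⟩
  simpa using (ZMod.intCast_zmod_eq_zero_iff_dvd _ n).mpr hb_sum

/-- Multiplying a zero sum whose least index is `i` by `n / m (i + 1)` kills every term but the one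
of index `i`. -/
theorem not_hasWZSSub_of_dvd_chain (hn : n ≠ 0) {A : Set (ZMod n)} (hA : A ⊆ USet n) {k : ℕ}
    {m : ℕ → ℕ} (hm : ∀ i j, i ≤ j → m i ∣ m j) (hmn : ∀ i, m i ∣ n)
    (hne : ∀ i < k, m i ≠ m (i + 1)) : ¬ HasWZSSub A fun i : Fin k => (m i : ZMod n) := by
  rintro ⟨I, hI, a, ha, hsum⟩
  let i : Fin k := I.min' hI
  have hi : i ∈ I := I.min'_mem hI
  obtain ⟨c, hc⟩ := hmn (i + 1)
  have hkill (j : Fin k) (hj : j ∈ I) (hji : j ≠ i) : (c : ZMod n) * (a j * m j) = 0 := by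
    have hij : i < j := lt_of_le_of_ne (I.min'_le j hj) hji.symm
    have hcj : (c : ZMod n) * m j = 0 := by
      rw [← Nat.cast_mul, ZMod.natCast_eq_zero_iff, hc, mul_comm c]
      exact mul_dvd_mul_right (hm _ _ hij) c
    rw [mul_left_comm, hcj, mul_zero]
  have hci : (c : ZMod n) * m i = 0 := by
    rw [← (hA (ha i hi)).mul_right_eq_zero, mul_left_comm, ← Finset.sum_eq_single_of_mem i hi hkill,
      ← Finset.mul_sum, hsum, mul_zero]
  rw [← Nat.cast_mul, ZMod.natCast_eq_zero_iff, mul_comm] at hci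
  have hc0 : c ≠ 0 := right_ne_zero_of_mul (hc ▸ hn)
  exact hne i i.2 (Nat.dvd_antisymm (hm _ _ (Nat.le_succ _))
    (Nat.dvd_of_mul_dvd_mul_right (Nat.pos_of_ne_zero hc0) (hc ▸ hci)))

theorem not_hasWZSSub_prod_take_primeFactorsList (hn : n ≠ 0) {A : Set (ZMod n)}
    (hA : A ⊆ USet n) {k : ℕ} (hk : k ≤ Ω n) :
    ¬ HasWZSSub A fun i : Fin k => ((n.primeFactorsList.take i).prod : ZMod n) := by
  refine not_hasWZSSub_of_dvd_chain hn hA (m := fun i => (n.primeFactorsList.take i).prod)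
    (fun i j hij => (List.take_prefix_take_left hij).sublist.prod_dvd_prod)
    (fun i => ?_) fun i hi h => ?_
  · conv_rhs => rw [← Nat.prod_primeFactorsList hn]
    exact (List.take_prefix i _).sublist.prod_dvd_prod
  · have hil : i < n.primeFactorsList.length := by
      rw [← ArithmeticFunction.cardFactors_apply]; lia
    have hpos : 0 < (n.primeFactorsList.take i).prod :=
      List.prod_pos fun q hq => Nat.pos_of_mem_primeFactorsList (List.mem_of_mem_take hq)
    rw [List.prod_take_succ _ _ hil, left_eq_mul₀ hpos.ne'] at h
    exact (Nat.prime_of_mem_primeFactorsList (List.getElem_mem hil)).ne_one h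

theorem davW_eq_add_one {A : Set (ZMod n)} {m : ℕ}
    (hupper : ∀ S : Fin (m + 1) → ZMod n, HasWZSSub A S)
    (hlower : ∀ k ≤ m, ∃ S : Fin k → ZMod n, ¬ HasWZSSub A S) : DavW n A = m + 1 := by
  have hmem : m + 1 ∈ {k | 0 < k ∧ ∀ S : Fin k → ZMod n, HasWZSSub A S} := ⟨m.succ_pos, hupper⟩
  refine le_antisymm (Nat.sInf_le hmem) (le_csInf ⟨_, hmem⟩ fun k hk => ?_)
  by_contra! hkm
  obtain ⟨S, hS⟩ := hlower k (Nat.lt_succ_iff.mp hkm)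
  exact hS (hk.2 S)

theorem davenport_S_nonsquarefree_general (n : ℕ) (hodd : Odd n)
    (h7 : ∀ q ∈ n.primeFactors, Odd (n.factorization q) → 7 ≤ q)
    (hcard : #{q ∈ n.primeFactors | Odd (n.factorization q)} ≠ 1) :
    DavW n (JSet n) = n.primeFactorsList.length + 1 := by
  rw [← ArithmeticFunction.cardFactors_apply]
  exact davW_eq_add_one
    (hasWZSSub_JSet_of_cardFactors_lt hodd h7 hcard (Nat.lt_succ_self _))
    fun k hk => ⟨_, not_hasWZSSub_prod_take_primeFactorsList hodd.pos.ne' (fun _ => And.left) hk⟩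

end Davenport

theorem davenport_S_nonsquarefree (n p' : ℕ) (hodd : Odd n) (hp' : p'.Prime)
    (hp'n : p' ∣ n) (hv : n.factorization p' = 2)
    (hq : ∀ q : ℕ, q.Prime → q ∣ n → q ≠ p' → n.factorization q = 1)
    (hp7 : ∀ p : ℕ, p.Prime → p ∣ n → 7 ≤ p)
    (homega : n.primeFactors.card ≠ 2) :
    DavW n (JSet n) = (Nat.primeFactorsList n).length + 1 := by
  have hodd_primes : {q ∈ n.primeFactors | Odd (n.factorization q)} = n.primeFactors.erase p' := by
    ext q
    rw [Finset.mem_filter, Finset.mem_erase, and_comm, and_congr_left_iff]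
    intro hqn
    rcases eq_or_ne q p' with rfl | hqp
    · simp [hv]
    · simp [hq q (Nat.prime_of_mem_primeFactors hqn) (Nat.dvd_of_mem_primeFactors hqn) hqp, hqp]
  have hp'_mem : p' ∈ n.primeFactors := Nat.mem_primeFactors.mpr ⟨hp', hp'n, hodd.pos.ne'⟩
  refine davenport_S_nonsquarefree_general n hodd
    (fun q hq _ => hp7 q (Nat.prime_of_mem_primeFactors hq) (Nat.dvd_of_mem_primeFactors hq)) ?_
  rw [hodd_primes, Finset.card_erase_of_mem hp'_mem]
  lia
end
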